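/- (Compactness of the weighted embedding, Lemma 3.2, sequential form.) Let 2 ≤ p < 2Q/(Q-2). Every sequence (u_k) of smooth compactly supported functions on ℝ^m × ℝ^n with ∫ |∇_G u_k|² dx dt ≤ 1 for all k admits a subsequence (u_{k_j}) that is a Cauchy sequence with respect to the norm u ↦ (∫ |u|^p · U^{2Q/(Q-2) − p} dx dt)^{1/p}. -/

import Mathlib

/-! The compactness comes from a representation of test functions by their horizontal
gradients. For an H-type group the function `N^{2-Q}` is, up to a constant, the
fundamental solution of the sub-Laplacian (Kaplan, Folland). Only its gradient field is needed: the
regularized field `Kj A e` has as divergence an approximate identity (`div_Kj`, `tendsto_mass`), and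
integrating by parts and letting the regularization tend to zero writes every test function as
`u x = -c ∫ ⟨∇_G u (x y), K y⟩ dy` with `|K| ≤ 2 N^{1-Q}` (`representation`).

The kernel is then split at a small homogeneous ball. Near the origin it lies in `L^s` for every
`s < Q/(Q-1)`, so, since `p` is below the critical exponent, Young's inequality (`young`, `near_le`)
shows that the near part contributes little to the `L^p` norm, uniformly over test functions with
bounded gradient; there the weight is simply bounded by one. The far part of the kernel lies in
`L²`, so weak sequential compactness of the gradients in `L²` gives one subsequence along which the
far integrals converge at every point and for every radius (`exists_subseq_trunc`).

Pointwise convergence of the far part is upgraded to convergence in the weighted space by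
interpolating between a uniform `L^q` bound, with `q` slightly above the critical exponent, and
dominated convergence against an integrable power of the weight (`tendsto_far`). Both parts together
give `tendsto_weighted`, which is applied to the differences `u_j - u_l`. -/

open MeasureTheory Real Filter Matrix

noncomputable section

abbrev Pt (m n : ℕ) := (Fin m → ℝ) × (Fin n → ℝ)

def IsHType (m n : ℕ) (A : Fin n → Matrix (Fin m) (Fin m) ℝ) : Prop :=
  (∀ k, (A k)ᵀ = -(A k)) ∧ (∀ k, A k * (A k)ᵀ = 1) ∧
    ∀ i j, i ≠ j → A i * A j + A j * A i = 0

def Qh (m n : ℕ) : ℝ := m + 2 * n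

def Xvf (m n : ℕ) (A : Fin n → Matrix (Fin m) (Fin m) ℝ) (j : Fin m)
    (u : Pt m n → ℝ) (p : Pt m n) : ℝ :=
  fderiv ℝ u p (Pi.single j 1, 0)
    + (1/2) * ∑ k : Fin n, (∑ i : Fin m, A k i j * p.1 i) * fderiv ℝ u p (0, Pi.single k 1)

def gradSq (m n : ℕ) (A : Fin n → Matrix (Fin m) (Fin m) ℝ)
    (u : Pt m n → ℝ) (p : Pt m n) : ℝ :=
  ∑ j : Fin m, (Xvf m n A j u p) ^ 2

def subLap (m n : ℕ) (A : Fin n → Matrix (Fin m) (Fin m) ℝ)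
    (u : Pt m n → ℝ) (p : Pt m n) : ℝ :=
  ∑ j : Fin m, Xvf m n A j (Xvf m n A j u) p

def Uf (m n : ℕ) (p : Pt m n) : ℝ :=
  ((1 + (∑ i, p.1 i ^ 2) / 4) ^ 2 + ∑ r, p.2 r ^ 2) ^ (-(Qh m n - 2) / 4)

def Sconst (m n : ℕ) : ℝ :=
  (4 : ℝ) ^ (-(2 * (n : ℝ)) / Qh m n) * ((m : ℝ) * (Qh m n - 2)) *
    π ^ (((m : ℝ) + n) / Qh m n) *
    (Real.Gamma (((m : ℝ) + n) / 2) / Real.Gamma ((m : ℝ) + n)) ^ ((2 : ℝ) / Qh m n)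

/-! ### The denominators and their integrability -/

/-- The denominator `(e + |x|²/4)² + |t|²`. The weight `U` is a power of `Dn 1`, and `Dn 0 = N⁴` for
the homogeneous norm `N` used in the comments below. -/
def Dn {m n : ℕ} (e : ℝ) (q : Pt m n) : ℝ :=
  (e + (∑ i, q.1 i ^ 2) / 4) ^ 2 + ∑ r, q.2 r ^ 2

section denominators

variable {m n : ℕ}

lemma continuous_Dn (e : ℝ) : Continuous (Dn e : Pt m n → ℝ) := by
  unfold Dn; fun_prop

lemma contDiff_Dn (e : ℝ) : ContDiff ℝ (⊤ : ℕ∞) (Dn e : Pt m n → ℝ) := by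
  unfold Dn; fun_prop

lemma Dn_nonneg (e : ℝ) (q : Pt m n) : 0 ≤ Dn e q := by
  unfold Dn; positivity

lemma Dn_pos {e : ℝ} (he : 0 < e) (q : Pt m n) : 0 < Dn e q := by
  unfold Dn; positivity

lemma one_le_Dn (q : Pt m n) : 1 ≤ Dn 1 q := by
  unfold Dn
  have h1 : 0 ≤ ∑ i, q.1 i ^ 2 := by positivity
  have h2 : 0 ≤ ∑ i, q.2 i ^ 2 := by positivity
  nlinarith

lemma Dn_mono {e e' : ℝ} (he : 0 ≤ e) (h : e ≤ e') (q : Pt m n) : Dn e q ≤ Dn e' q := by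
  unfold Dn; gcongr

lemma norm_sq_le_sum {k : ℕ} (x : Fin k → ℝ) : ‖x‖ ^ 2 ≤ ∑ i, x i ^ 2 := by
  have h0 : 0 ≤ ∑ i, x i ^ 2 := by positivity
  have h : ‖x‖ ≤ √(∑ i, x i ^ 2) := by
    refine (pi_norm_le_iff_of_nonneg (Real.sqrt_nonneg _)).2 fun i => ?_
    refine Real.abs_le_sqrt ?_
    exact Finset.single_le_sum (f := fun i => x i ^ 2) (fun _ _ => sq_nonneg _) (Finset.mem_univ i)
  calc ‖x‖ ^ 2 ≤ (√(∑ i, x i ^ 2)) ^ 2 := by gcongr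
    _ = _ := Real.sq_sqrt h0

lemma norm_fst_pow_le (q : Pt m n) : ‖q.1‖ ^ 4 ≤ 16 * Dn 0 q := by
  unfold Dn
  have h := norm_sq_le_sum q.1
  have h2 : 0 ≤ ∑ i, q.2 i ^ 2 := by positivity
  have : ‖q.1‖ ^ 4 = (‖q.1‖ ^ 2) ^ 2 := by ring
  rw [this]
  nlinarith [sq_nonneg ‖q.1‖]

lemma norm_snd_pow_le (q : Pt m n) : ‖q.2‖ ^ 2 ≤ Dn 0 q := by
  unfold Dn
  have h := norm_sq_le_sum q.2
  nlinarith [sq_nonneg (0 + (∑ i, q.1 i ^ 2) / 4)]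

lemma one_add_norm_fst_pow_le (q : Pt m n) : (1 + ‖q.1‖) ^ 4 ≤ 64 * Dn 1 q := by
  unfold Dn
  have h := norm_sq_le_sum q.1
  have h2 : 0 ≤ ∑ i, q.2 i ^ 2 := by positivity
  have h3 : (1 + ‖q.1‖) ^ 2 ≤ 8 * (1 + (∑ i, q.1 i ^ 2) / 4) := by
    nlinarith [sq_nonneg (‖q.1‖ - 1), norm_nonneg q.1]
  calc (1 + ‖q.1‖) ^ 4 = ((1 + ‖q.1‖) ^ 2) ^ 2 := by ring
    _ ≤ (8 * (1 + (∑ i, q.1 i ^ 2) / 4)) ^ 2 := by gcongr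
    _ ≤ _ := by nlinarith

lemma one_add_norm_snd_pow_le (q : Pt m n) : (1 + ‖q.2‖) ^ 2 ≤ 2 * Dn 1 q := by
  unfold Dn
  have h := norm_sq_le_sum q.2
  have h1 : 0 ≤ ∑ i, q.1 i ^ 2 := by positivity
  nlinarith [sq_nonneg (‖q.2‖ - 1), norm_nonneg q.2]

lemma Dn_one_le (q : Pt m n) : Dn 1 q ≤ 2 + 2 * Dn 0 q := by
  unfold Dn
  have h1 : 0 ≤ ∑ i, q.2 i ^ 2 := by positivity
  nlinarith [sq_nonneg ((∑ i, q.1 i ^ 2) / 4 - 1)]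

lemma Dn_zero_pos {q : Pt m n} (hq : q ≠ 0) : 0 < Dn 0 q := by
  refine (Dn_nonneg 0 q).lt_of_ne' fun h => hq ?_
  have h1 := norm_fst_pow_le q
  have h2 := norm_snd_pow_le q
  rw [h] at h1 h2
  have h1' : ‖q.1‖ = 0 := by
    by_contra hne
    have : 0 < ‖q.1‖ := lt_of_le_of_ne (norm_nonneg _) (Ne.symm hne)
    have : 0 < ‖q.1‖ ^ 4 := by positivity
    linarith
  have h2' : ‖q.2‖ = 0 := by
    by_contra hne
    have : 0 < ‖q.2‖ := lt_of_le_of_ne (norm_nonneg _) (Ne.symm hne)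
    have : 0 < ‖q.2‖ ^ 2 := by positivity
    linarith
  exact Prod.ext (norm_eq_zero.1 h1') (norm_eq_zero.1 h2')

lemma Qh_pos (hm : 1 ≤ m) (hn : 1 ≤ n) : 2 < Qh m n := by
  have h1 : (1 : ℝ) ≤ m := by exact_mod_cast hm
  have h2 : (1 : ℝ) ≤ n := by exact_mod_cast hn
  unfold Qh; linarith

/-- If `a⁴ ≤ c D` and `b² ≤ c D`, the power `D ^ (-s/4)` is dominated by a product of powers of `a`
and `b`; the exponents are split in the proportion `m : 2n` dictated by the dilations. -/
lemma rpow_split {a b d c s : ℝ} (hm : 1 ≤ m) (hn : 1 ≤ n) (ha : 0 < a) (hb : 0 < b) (hc : 0 < c)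
    (hs : 0 < s) (h1 : a ^ 4 ≤ c * d) (h2 : b ^ 2 ≤ c * d) :
    d ^ (-s / 4) ≤ c ^ (s / 4) * (a ^ (-(s * m / Qh m n)) * b ^ (-(s * n / Qh m n))) := by
  have hQ := Qh_pos hm hn
  have hd : 0 < c * d := lt_of_lt_of_le (by positivity) h1
  have hd0 : 0 < d := pos_of_mul_pos_right hd hc.le
  have e1 : (c * d) ^ (-(s * m / Qh m n) / 4) ≤ a ^ (-(s * m / Qh m n)) := by
    have : a ^ (-(s * m / Qh m n)) = (a ^ 4) ^ (-(s * m / Qh m n) / 4) := by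
      rw [← Real.rpow_natCast a 4, ← Real.rpow_mul ha.le]; congr 1; push_cast; ring
    rw [this]
    refine Real.rpow_le_rpow_of_nonpos (by positivity) h1 ?_
    have : 0 ≤ s * m / Qh m n := by positivity
    linarith
  have e2 : (c * d) ^ (-(s * n / Qh m n) / 2) ≤ b ^ (-(s * n / Qh m n)) := by
    have : b ^ (-(s * n / Qh m n)) = (b ^ 2) ^ (-(s * n / Qh m n) / 2) := by
      rw [← Real.rpow_natCast b 2, ← Real.rpow_mul hb.le]; congr 1; push_cast; ring
    rw [this]
    refine Real.rpow_le_rpow_of_nonpos (by positivity) h2 ?_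
    have : 0 ≤ s * n / Qh m n := by positivity
    linarith
  have e3 : d ^ (-s / 4) = c ^ (s / 4) * (c * d) ^ (-s / 4) := by
    rw [Real.mul_rpow hc.le hd0.le, ← mul_assoc, ← Real.rpow_add hc]
    have : s / 4 + -s / 4 = 0 := by ring
    simp [this]
  have e4 : (c * d) ^ (-s / 4)
      = (c * d) ^ (-(s * m / Qh m n) / 4) * (c * d) ^ (-(s * n / Qh m n) / 2) := by
    rw [← Real.rpow_add hd]; congr 1
    unfold Qh at *; field_simp; ring
  rw [e3, e4]
  gcongr

/-- `(1 + N)^{-s}` is integrable when `s` exceeds the homogeneous dimension. -/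
lemma integrable_Dn_one (hm : 1 ≤ m) (hn : 1 ≤ n) {s : ℝ} (hs : Qh m n < s) :
    Integrable (fun q : Pt m n => Dn 1 q ^ (-s / 4)) := by
  have hQ := Qh_pos hm hn
  have hm' : (0 : ℝ) < m := by exact_mod_cast hm
  have hn' : (0 : ℝ) < n := by exact_mod_cast hn
  have i1 : Integrable (fun x : Fin m → ℝ => (1 + ‖x‖) ^ (-(s * m / Qh m n))) := by
    refine integrable_one_add_norm ?_
    simp only [Module.finrank_fin_fun]
    rw [lt_div_iff₀ (by linarith)]; nlinarith
  have i2 : Integrable (fun x : Fin n → ℝ => (1 + ‖x‖) ^ (-(s * n / Qh m n))) := by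
    refine integrable_one_add_norm ?_
    simp only [Module.finrank_fin_fun]
    rw [lt_div_iff₀ (by linarith)]; nlinarith
  refine ((i1.mul_prod i2).const_mul ((64 : ℝ) ^ (s / 4))).mono'
    ((continuous_Dn 1).rpow_const fun q =>
      Or.inl (Dn_pos one_pos q).ne').aestronglyMeasurable ?_
  refine Eventually.of_forall fun q => ?_
  rw [Real.norm_of_nonneg (Real.rpow_nonneg (Dn_nonneg _ _) _)]
  refine rpow_split hm hn (by positivity) (by positivity) (by norm_num) (by linarith)
    (one_add_norm_fst_pow_le q) ((one_add_norm_snd_pow_le q).trans ?_)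
  linarith [Dn_nonneg 1 q]

lemma measurable_Dn_rpow (e s : ℝ) : Measurable (fun q : Pt m n => Dn e q ^ s) :=
  (continuous_Dn e).measurable.pow_const s

/-- `N^{-s}` is integrable away from the origin when `s` exceeds the homogeneous dimension. -/
lemma integrableOn_Dn_far (hm : 1 ≤ m) (hn : 1 ≤ n) {s r : ℝ} (hr : 0 < r) (hs : Qh m n < s) :
    IntegrableOn (fun q : Pt m n => Dn 0 q ^ (-s / 4)) {q | r ≤ Dn 0 q} := by
  have hQ := Qh_pos hm hn
  refine ((integrable_Dn_one hm hn hs).const_mul ((2 / r + 2) ^ (s / 4))).integrableOn.mono'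
    (measurable_Dn_rpow _ _).aestronglyMeasurable ?_
  refine (ae_restrict_iff' (measurableSet_le measurable_const (continuous_Dn 0).measurable)).2 ?_
  refine Eventually.of_forall fun q (hq : r ≤ Dn 0 q) => ?_
  have hq0 : 0 < Dn 0 q := hr.trans_le hq
  rw [Real.norm_of_nonneg (Real.rpow_nonneg (Dn_nonneg _ _) _)]
  have h1 : Dn 1 q ≤ (2 / r + 2) * Dn 0 q := by
    have := Dn_one_le q
    have h3 : 2 ≤ 2 / r * Dn 0 q := by
      rw [div_mul_eq_mul_div, le_div_iff₀ hr]; linarith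
    linarith
  have hc : 0 < 2 / r + 2 := by positivity
  have h2 : ((2 / r + 2) * Dn 0 q) ^ (-s / 4) ≤ Dn 1 q ^ (-s / 4) :=
    Real.rpow_le_rpow_of_nonpos (Dn_pos one_pos q) h1 (by linarith)
  calc Dn 0 q ^ (-s / 4) = (2 / r + 2) ^ (s / 4) * ((2 / r + 2) * Dn 0 q) ^ (-s / 4) := by
        rw [Real.mul_rpow hc.le hq0.le, ← mul_assoc, ← Real.rpow_add hc]
        have : s / 4 + -s / 4 = 0 := by ring
        simp [this]
    _ ≤ _ := by gcongr

lemma integrableOn_ball_norm_rpow {k : ℕ} (hk : 1 ≤ k) {α R : ℝ} (hα : α < k) :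
    IntegrableOn (fun x : Fin k → ℝ => ‖x‖ ^ (-α)) (Metric.ball 0 R) := by
  refine integrableOn_ball_of_norm_le_rpow (C := 1) (α := α) (by simpa using hk)
    (by simpa using hα) ?_ (measurable_norm.pow_const _).aestronglyMeasurable
  refine (ae_restrict_iff' measurableSet_ball).2 (Eventually.of_forall fun x _ => ?_)
  rw [Real.norm_of_nonneg (by positivity), one_mul]

/-- `N^{-s}` is integrable near the origin when `s` is below the homogeneous dimension. -/
lemma integrableOn_Dn_near (hm : 1 ≤ m) (hn : 1 ≤ n) {s r : ℝ} (hs0 : 0 < s)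
    (hs : s < Qh m n) :
    IntegrableOn (fun q : Pt m n => Dn 0 q ^ (-s / 4)) {q | Dn 0 q < r} := by
  have hQ := Qh_pos hm hn
  have hm' : (0 : ℝ) < m := by exact_mod_cast hm
  have hn' : (0 : ℝ) < n := by exact_mod_cast hn
  set R : ℝ := 16 * |r| + 2
  have i1 : IntegrableOn (fun x : Fin m → ℝ => ‖x‖ ^ (-(s * m / Qh m n))) (Metric.ball 0 R) := by
    refine integrableOn_ball_norm_rpow hm ?_
    rw [div_lt_iff₀ (by linarith)]; nlinarith
  have i2 : IntegrableOn (fun x : Fin n → ℝ => ‖x‖ ^ (-(s * n / Qh m n))) (Metric.ball 0 R) := by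
    refine integrableOn_ball_norm_rpow hn ?_
    rw [div_lt_iff₀ (by linarith)]; nlinarith
  have i3 : IntegrableOn (fun q : Pt m n =>
      (16 : ℝ) ^ (s / 4) * (‖q.1‖ ^ (-(s * m / Qh m n)) * ‖q.2‖ ^ (-(s * n / Qh m n))))
      (Metric.ball 0 R ×ˢ Metric.ball 0 R) := by
    have := (Integrable.mul_prod i1 i2).const_mul ((16 : ℝ) ^ (s / 4))
    rwa [Measure.prod_restrict] at this
  have hsub : {q : Pt m n | Dn 0 q < r} ⊆ Metric.ball 0 R ×ˢ Metric.ball 0 R := by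
    intro q (hq : Dn 0 q < r)
    have h1 := norm_fst_pow_le q
    have h2 := norm_snd_pow_le q
    have h3 := le_abs_self r
    have h4 := abs_nonneg r
    refine ⟨?_, ?_⟩ <;> rw [mem_ball_zero_iff] <;> by_contra! hcon
    · have h5 : R ^ 4 ≤ ‖q.1‖ ^ 4 := by gcongr
      have h6 : R ≤ R ^ 4 := le_self_pow₀ (by simp only [R]; linarith) (by norm_num)
      simp only [R] at *; linarith
    · have h5 : R ^ 2 ≤ ‖q.2‖ ^ 2 := by gcongr
      have h6 : R ≤ R ^ 2 := le_self_pow₀ (by simp only [R]; linarith) (by norm_num)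
      simp only [R] at *; linarith
  refine (i3.mono_set hsub).mono' (measurable_Dn_rpow _ _).aestronglyMeasurable ?_
  -- off the two null subspaces `x = 0` and `t = 0` the product bound applies
  have : Nonempty (Fin m) := ⟨⟨0, hm⟩⟩
  have : Nonempty (Fin n) := ⟨⟨0, hn⟩⟩
  have z1 : ∀ᵐ q : Pt m n, q.1 ≠ 0 :=
    Measure.quasiMeasurePreserving_fst.ae (Measure.ae_ne volume (0 : Fin m → ℝ))
  have z2 : ∀ᵐ q : Pt m n, q.2 ≠ 0 :=
    Measure.quasiMeasurePreserving_snd.ae (Measure.ae_ne volume (0 : Fin n → ℝ))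
  filter_upwards [ae_restrict_of_ae z1, ae_restrict_of_ae z2] with q h1 h2
  rw [Real.norm_of_nonneg (Real.rpow_nonneg (Dn_nonneg _ _) _)]
  refine rpow_split hm hn (norm_pos_iff.2 h1) (norm_pos_iff.2 h2) (by norm_num) hs0
    (norm_fst_pow_le q) ((norm_snd_pow_le q).trans ?_)
  linarith [Dn_nonneg 0 q]

end denominators

/-! ### Horizontal vector fields and the kernel field -/

instance isAddHaarMeasure_Pt (m n : ℕ) : (volume : Measure (Pt m n)).IsAddHaarMeasure :=
  Measure.prod.instIsAddHaarMeasure _ _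

section vectorFields

variable {m n : ℕ} (A : Fin n → Matrix (Fin m) (Fin m) ℝ)

/-- The `j`-th coordinate of `x A_k`; the `t_k`-component of `X_j` is half of it. -/
def rowA (k : Fin n) (j : Fin m) (x : Fin m → ℝ) : ℝ := ∑ i, A k i j * x i

/-- The value at `q` of the vector field `X_j`, as a vector of `ℝ^m × ℝ^n`. -/
def hdir (j : Fin m) (q : Pt m n) : Pt m n :=
  (Pi.single j 1, fun k => (1 / 2) * rowA A k j q.1)

lemma Xvf_eq (j : Fin m) (u : Pt m n → ℝ) (q : Pt m n) :
    Xvf m n A j u q = fderiv ℝ u q (hdir A j q) := by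
  have h : hdir A j q = ((Pi.single j 1, 0) : Pt m n)
      + ∑ k, ((1 / 2) * rowA A k j q.1) • ((0, Pi.single k 1) : Pt m n) := by
    refine Prod.ext ?_ ?_
    · simp [hdir, Prod.fst_sum]
    · funext k
      simp [hdir, Prod.snd_sum, Finset.sum_apply, Pi.single_apply]
  rw [h, map_add, map_sum]
  simp only [map_smul, smul_eq_mul, Xvf, Finset.mul_sum, rowA]
  congr 1
  refine Finset.sum_congr rfl fun k _ => ?_
  rw [← mul_assoc, ← Finset.mul_sum]

lemma hasDerivAt_line {u : Pt m n → ℝ} {q : Pt m n} (hu : DifferentiableAt ℝ u q) (j : Fin m) :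
    HasDerivAt (fun τ : ℝ => u (q + τ • hdir A j q)) (Xvf m n A j u q) 0 := by
  rw [Xvf_eq]
  exact hu.hasFDerivAt.hasLineDerivAt _

lemma Xvf_of_hasDerivAt {u : Pt m n → ℝ} {q : Pt m n} {a : ℝ} (hu : DifferentiableAt ℝ u q)
    (j : Fin m) (h : HasDerivAt (fun τ : ℝ => u (q + τ • hdir A j q)) a 0) :
    Xvf m n A j u q = a :=
  (hasDerivAt_line A hu j).unique h

lemma Xvf_mul {u v : Pt m n → ℝ} {q : Pt m n} (hu : DifferentiableAt ℝ u q)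
    (hv : DifferentiableAt ℝ v q) (j : Fin m) :
    Xvf m n A j (fun q => u q * v q) q = Xvf m n A j u q * v q + u q * Xvf m n A j v q := by
  refine Xvf_of_hasDerivAt A (hu.mul hv) j ?_
  have := (hasDerivAt_line A hu j).fun_mul (hasDerivAt_line A hv j)
  simpa using this

lemma Xvf_sub {u v : Pt m n → ℝ} {q : Pt m n} (hu : DifferentiableAt ℝ u q)
    (hv : DifferentiableAt ℝ v q) (j : Fin m) :
    Xvf m n A j (fun q => u q - v q) q = Xvf m n A j u q - Xvf m n A j v q :=
  Xvf_of_hasDerivAt A (hu.sub hv) j ((hasDerivAt_line A hu j).sub (hasDerivAt_line A hv j))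

lemma differentiableAt_rpow {u : Pt m n → ℝ} {q : Pt m n} (hu : DifferentiableAt ℝ u q)
    (h0 : 0 < u q) (s : ℝ) : DifferentiableAt ℝ (fun q => u q ^ s) q :=
  hu.rpow_const (Or.inl h0.ne')

lemma Xvf_rpow {u : Pt m n → ℝ} {q : Pt m n} (hu : DifferentiableAt ℝ u q) (h0 : 0 < u q)
    (s : ℝ) (j : Fin m) :
    Xvf m n A j (fun q => u q ^ s) q = Xvf m n A j u q * s * u q ^ (s - 1) := by
  refine Xvf_of_hasDerivAt A (differentiableAt_rpow hu h0 s) j ?_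
  have := (hasDerivAt_line A hu j).rpow_const (p := s) (Or.inl (by simpa using h0.ne'))
  simpa using this

lemma differentiable_Dn (e : ℝ) : Differentiable ℝ (Dn e : Pt m n → ℝ) :=
  (contDiff_Dn e).differentiable (by simp)

lemma hasDerivAt_coord_fst (j i : Fin m) (q : Pt m n) :
    HasDerivAt (fun τ : ℝ => (q + τ • hdir A j q).1 i) ((Pi.single j 1 : Fin m → ℝ) i) 0 := by
  have := ((hasDerivAt_id (0 : ℝ)).mul_const ((Pi.single j 1 : Fin m → ℝ) i)).const_add (q.1 i)
  simpa [hdir] using this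

lemma hasDerivAt_coord_snd (j : Fin m) (k : Fin n) (q : Pt m n) :
    HasDerivAt (fun τ : ℝ => (q + τ • hdir A j q).2 k) ((1 / 2) * rowA A k j q.1) 0 := by
  have := ((hasDerivAt_id (0 : ℝ)).mul_const ((1 / 2) * rowA A k j q.1)).const_add (q.2 k)
  simpa [hdir] using this

lemma hasDerivAt_base (e : ℝ) (j : Fin m) (q : Pt m n) :
    HasDerivAt (fun τ : ℝ => e + (∑ i, (q + τ • hdir A j q).1 i ^ 2) / 4) (q.1 j / 2) 0 := by
  have h1 := HasDerivAt.fun_sum (u := Finset.univ) fun i (_ : i ∈ Finset.univ) =>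
    (hasDerivAt_coord_fst A j i q).pow 2
  have h2 := (h1.div_const 4).const_add e
  refine h2.congr_deriv ?_
  simp [Pi.single_apply]
  ring

/-- The horizontal derivative `X_j` of the denominator `Dn e`, see `Xvf_Dn`. -/
def Pj (e : ℝ) (j : Fin m) (q : Pt m n) : ℝ :=
  (e + (∑ i, q.1 i ^ 2) / 4) * q.1 j + ∑ k, q.2 k * rowA A k j q.1

lemma Xvf_Dn (e : ℝ) (j : Fin m) (q : Pt m n) :
    Xvf m n A j (Dn e) q = Pj A e j q := by
  refine Xvf_of_hasDerivAt A (differentiable_Dn e q) j ?_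
  have h1 := HasDerivAt.fun_sum (u := Finset.univ) fun k (_ : k ∈ Finset.univ) =>
    (hasDerivAt_coord_snd A j k q).pow 2
  have h2 := ((hasDerivAt_base A e j q).pow 2).add h1
  refine h2.congr_deriv ?_
  simp only [Pj, zero_smul, add_zero]
  congr 1
  · push_cast; ring
  · refine Finset.sum_congr rfl fun k _ => ?_
    push_cast; ring

lemma contDiff_Pj (e : ℝ) (j : Fin m) : ContDiff ℝ (⊤ : ℕ∞) (Pj A e j : Pt m n → ℝ) := by
  unfold Pj rowA; fun_prop

lemma Xvf_Pj (e : ℝ) (j : Fin m) (q : Pt m n) :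
    Xvf m n A j (Pj A e j) q = q.1 j ^ 2 / 2 + (e + (∑ i, q.1 i ^ 2) / 4)
      + ((1 / 2) * ∑ k, rowA A k j q.1 ^ 2 + ∑ k, q.2 k * A k j j) := by
  refine Xvf_of_hasDerivAt A ((contDiff_Pj A e j).differentiable (by simp) q) j ?_
  have h0 : ∀ k, HasDerivAt (fun τ : ℝ => rowA A k j (q + τ • hdir A j q).1) (A k j j) 0 := by
    intro k
    have := HasDerivAt.fun_sum (u := Finset.univ) fun i (_ : i ∈ Finset.univ) =>
      (hasDerivAt_coord_fst A j i q).const_mul (A k i j)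
    refine this.congr_deriv ?_
    simp [Pi.single_apply]
  have h1 := HasDerivAt.fun_sum (u := Finset.univ) fun k (_ : k ∈ Finset.univ) =>
    (hasDerivAt_coord_snd A j k q).mul (h0 k)
  have h2 := ((hasDerivAt_base A e j q).mul (hasDerivAt_coord_fst A j j q)).add h1
  refine h2.congr_deriv ?_
  simp only [zero_smul, add_zero, Pi.single_eq_same]
  rw [Finset.sum_add_distrib, Finset.mul_sum]
  congr 1
  · ring
  · congr 1
    refine Finset.sum_congr rfl fun k _ => by ring

section HType

variable {A}

lemma rowA_eq (k : Fin n) (x : Fin m → ℝ) (j : Fin m) : rowA A k j x = (x ᵥ* A k) j := by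
  simp [rowA, Matrix.vecMul, dotProduct, mul_comm]

lemma diag_eq_zero (hA : IsHType m n A) (k : Fin n) (j : Fin m) : A k j j = 0 := by
  have := congrFun (congrFun (hA.1 k) j) j
  simp only [Matrix.transpose_apply, Matrix.neg_apply] at this
  linarith

lemma quad_skew {M : Matrix (Fin m) (Fin m) ℝ} (hM : Mᵀ = -M) (x : Fin m → ℝ) :
    (x ᵥ* M) ⬝ᵥ x = 0 := by
  have h : (x ᵥ* M) ⬝ᵥ x = (x ᵥ* Mᵀ) ⬝ᵥ x := by
    rw [Matrix.vecMul_transpose, dotProduct_comm (M *ᵥ x) x, Matrix.dotProduct_mulVec]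
  rw [hM, Matrix.vecMul_neg, neg_dotProduct] at h
  linarith

lemma sum_rowA_mul_self (hA : IsHType m n A) (k : Fin n) (x : Fin m → ℝ) : ∑ j, rowA A k j x * x j = 0 := by
  have := quad_skew (hA.1 k) x
  simpa only [dotProduct, ← rowA_eq] using this

lemma sum_rowA_mul_rowA (hA : IsHType m n A) (k l : Fin n) (x : Fin m → ℝ) :
    ∑ j, rowA A k j x * rowA A l j x = if k = l then ∑ i, x i ^ 2 else 0 := by
  have e : ∑ j, rowA A k j x * rowA A l j x = (x ᵥ* (A k * (A l)ᵀ)) ⬝ᵥ x := by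
    rw [← Matrix.vecMul_vecMul, Matrix.vecMul_transpose, dotProduct_comm,
      Matrix.dotProduct_mulVec, dotProduct_comm]
    simp only [dotProduct, ← rowA_eq]
  rw [e]
  split_ifs with h
  · subst h
    rw [hA.2.1 k, Matrix.vecMul_one]
    simp [dotProduct, sq]
  · refine quad_skew ?_ x
    have h1 := hA.2.2 k l h
    rw [Matrix.transpose_mul, Matrix.transpose_transpose, hA.1 k, hA.1 l]
    rw [Matrix.mul_neg, Matrix.mul_neg, neg_neg, neg_eq_iff_add_eq_zero, add_comm]
    exact h1

/-- The eikonal-type identity `|∇_G Dn|² = |x|² Dn`: the H-type relations make the vectors `x`,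
`x A_1`, …, `x A_n` mutually orthogonal and of equal length. -/
lemma sum_Pj_sq (hA : IsHType m n A) (e : ℝ) (q : Pt m n) :
    ∑ j, Pj A e j q ^ 2 = (∑ i, q.1 i ^ 2) * Dn e q := by
  set c := e + (∑ i, q.1 i ^ 2) / 4 with hc
  have h1 : ∀ j, Pj A e j q ^ 2 = c ^ 2 * q.1 j ^ 2
      + 2 * c * ∑ k, q.2 k * (rowA A k j q.1 * q.1 j)
      + ∑ k, ∑ l, q.2 k * q.2 l * (rowA A k j q.1 * rowA A l j q.1) := by
    intro j
    have : ∑ k, ∑ l, q.2 k * q.2 l * (rowA A k j q.1 * rowA A l j q.1)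
        = (∑ k, q.2 k * rowA A k j q.1) ^ 2 := by
      rw [sq, Finset.sum_mul_sum]
      exact Finset.sum_congr rfl fun k _ => Finset.sum_congr rfl fun l _ => by ring
    rw [this]
    have : ∑ k, q.2 k * (rowA A k j q.1 * q.1 j) = (∑ k, q.2 k * rowA A k j q.1) * q.1 j := by
      rw [Finset.sum_mul]; exact Finset.sum_congr rfl fun k _ => by ring
    rw [this]
    simp only [Pj, ← hc]; ring
  simp only [h1, Finset.sum_add_distrib, ← Finset.mul_sum]
  have h2 : ∑ j, ∑ k, q.2 k * (rowA A k j q.1 * q.1 j) = 0 := by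
    rw [Finset.sum_comm]
    refine Finset.sum_eq_zero fun k _ => ?_
    rw [← Finset.mul_sum, sum_rowA_mul_self hA, mul_zero]
  have h3 : ∑ j, ∑ k, ∑ l, q.2 k * q.2 l * (rowA A k j q.1 * rowA A l j q.1)
      = (∑ k, q.2 k ^ 2) * ∑ i, q.1 i ^ 2 := by
    rw [Finset.sum_comm, Finset.sum_mul]
    refine Finset.sum_congr rfl fun k _ => ?_
    rw [Finset.sum_comm]
    simp only [← Finset.mul_sum, sum_rowA_mul_rowA hA]
    simp [sq]
  rw [h2, h3, Dn, ← hc]; ring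

/-- The kernel field: up to a constant, the horizontal gradient of `Dn e ^ (-(Q-2)/4)`. -/
def Kj (A : Fin n → Matrix (Fin m) (Fin m) ℝ) (e : ℝ) (j : Fin m) (q : Pt m n) : ℝ :=
  Dn e q ^ (-(Qh m n + 2) / 4) * Pj A e j q

lemma contDiff_Kj {e : ℝ} (he : 0 < e) (j : Fin m) : ContDiff ℝ (⊤ : ℕ∞) (Kj A e j) :=
  ((contDiff_Dn e).rpow_const_of_ne fun q => (Dn_pos he q).ne').mul (contDiff_Pj A e j)

/-- The Kaplan–Folland computation: the horizontal divergence of the kernel field. This is where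
the H-type relations enter. -/
lemma div_Kj (hA : IsHType m n A) {e : ℝ} (he : 0 < e) (q : Pt m n) :
    ∑ j, Xvf m n A j (Kj A e j) q = m * e * Dn e q ^ (-(Qh m n + 2) / 4) := by
  have hD := Dn_pos he q
  set s := -(Qh m n + 2) / 4 with hs
  have h1 : ∀ j, Xvf m n A j (Kj A e j) q
      = s * Dn e q ^ (s - 1) * Pj A e j q ^ 2
        + Dn e q ^ s * (q.1 j ^ 2 / 2 + (e + (∑ i, q.1 i ^ 2) / 4)
          + (1 / 2) * ∑ k, rowA A k j q.1 ^ 2) := by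
    intro j
    have := Xvf_mul A (differentiableAt_rpow (differentiable_Dn e q) hD s)
      ((contDiff_Pj A e j).differentiable (by simp) q) j
    rw [Xvf_rpow A (differentiable_Dn e q) hD, Xvf_Dn, Xvf_Pj] at this
    simp only [diag_eq_zero hA, mul_zero, Finset.sum_const_zero, add_zero] at this
    unfold Kj
    rw [← hs, this]; ring
  have h2 : ∑ j, ∑ k, rowA A k j q.1 ^ 2 = n * ∑ i, q.1 i ^ 2 := by
    rw [Finset.sum_comm]
    have : ∀ k, ∑ j, rowA A k j q.1 ^ 2 = ∑ i, q.1 i ^ 2 := fun k => by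
      simpa [sq] using sum_rowA_mul_rowA hA k k q.1
    simp [this]
  have h3 : Dn e q ^ (s - 1) * Dn e q = Dn e q ^ s := by
    rw [← Real.rpow_add_one hD.ne']; congr 1; ring
  simp only [h1, Finset.sum_add_distrib, ← Finset.mul_sum]
  rw [sum_Pj_sq hA, h2, ← Finset.sum_div]
  simp only [Finset.sum_const, Finset.card_univ, Fintype.card_fin, nsmul_eq_mul]
  have h4 : s * Dn e q ^ (s - 1) * ((∑ i, q.1 i ^ 2) * Dn e q)
      = s * (∑ i, q.1 i ^ 2) * Dn e q ^ s := by rw [← h3]; ring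
  rw [h4, hs]
  unfold Qh
  ring

/-- The kernel field is `O(N^{1-Q})`, uniformly in the regularization `e`. -/
lemma sum_Kj_sq_le (hA : IsHType m n A) {e : ℝ} (he : 0 ≤ e) (q : Pt m n) :
    ∑ j, Kj A e j q ^ 2 ≤ (2 * Dn e q ^ (-(Qh m n - 1) / 4)) ^ 2 := by
  have h : ∑ j, Kj A e j q ^ 2
      = (Dn e q ^ (-(Qh m n + 2) / 4)) ^ 2 * ((∑ i, q.1 i ^ 2) * Dn e q) := by
    rw [← sum_Pj_sq hA, Finset.mul_sum]
    exact Finset.sum_congr rfl fun j _ => by rw [Kj, mul_pow]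
  rw [h]
  rcases (Dn_nonneg e q).eq_or_lt with h0 | h0
  · rw [← h0]; simp only [mul_zero]; positivity
  have hx : ∑ i, q.1 i ^ 2 ≤ 4 * Dn e q ^ (1 / 2 : ℝ) := by
    have h1 : 0 ≤ ∑ i, q.1 i ^ 2 := by positivity
    have h2 : 0 ≤ ∑ i, q.2 i ^ 2 := by positivity
    have : (∑ i, q.1 i ^ 2) / 4 ≤ √(Dn e q) := by
      refine Real.le_sqrt_of_sq_le ?_
      unfold Dn
      nlinarith
    rw [← Real.sqrt_eq_rpow]; linarith
  calc (Dn e q ^ (-(Qh m n + 2) / 4)) ^ 2 * ((∑ i, q.1 i ^ 2) * Dn e q)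
      ≤ (Dn e q ^ (-(Qh m n + 2) / 4)) ^ 2 * ((4 * Dn e q ^ (1 / 2 : ℝ)) * Dn e q) := by gcongr
    _ = 4 * (Dn e q ^ (-(Qh m n + 2) / 4 * 2) * Dn e q ^ (1 / 2 : ℝ) * Dn e q) := by
        rw [Real.rpow_mul h0.le]; norm_cast; ring
    _ = 4 * Dn e q ^ (-(Qh m n - 1) / 4 * 2) := by
        rw [← Real.rpow_add h0, ← Real.rpow_add_one h0.ne']; congr 2; ring
    _ = _ := by rw [Real.rpow_mul h0.le]; norm_cast; ring

end HType

lemma continuous_Xvf {u : Pt m n → ℝ} (hu : ContDiff ℝ (⊤ : ℕ∞) u) (j : Fin m) :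
    Continuous (Xvf m n A j u) := by
  unfold Xvf
  have := hu.continuous_fderiv (by simp)
  fun_prop

lemma hasCompactSupport_Xvf {u : Pt m n → ℝ} (hu : HasCompactSupport u) (j : Fin m) :
    HasCompactSupport (Xvf m n A j u) := by
  refine (hu.fderiv (𝕜 := ℝ)).mono fun q hq => ?_
  contrapose! hq
  simp only [Function.mem_support, not_not] at hq ⊢
  rw [Xvf_eq, hq]; rfl

lemma integrable_Xvf {u : Pt m n → ℝ} (hu : ContDiff ℝ (⊤ : ℕ∞) u) (hs : HasCompactSupport u)
    (j : Fin m) : Integrable (Xvf m n A j u) :=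
  (continuous_Xvf A hu j).integrable_of_hasCompactSupport (hasCompactSupport_Xvf A hs j)

/-- The fields `X_j` are divergence free: the coefficient of `∂_{t_k}` does not depend on `t`. -/
lemma integral_Xvf {u : Pt m n → ℝ} (hu : ContDiff ℝ (⊤ : ℕ∞) u) (hs : HasCompactSupport u)
    (j : Fin m) : ∫ q, Xvf m n A j u q = 0 := by
  have hc := hu.continuous_fderiv (by simp)
  have hsf := hs.fderiv (𝕜 := ℝ)
  have hint : ∀ (f : Pt m n → ℝ) (v : Pt m n), Continuous f →
      Integrable (fun q => f q * fderiv ℝ u q v) := by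
    intro f v hf
    refine Continuous.integrable_of_hasCompactSupport (by fun_prop) ?_
    refine HasCompactSupport.mul_left (hsf.mono fun q hq => ?_)
    contrapose! hq
    simp only [Function.mem_support, not_not] at hq ⊢
    rw [hq]; rfl
  have key : ∀ (f : Pt m n → ℝ) (v : Pt m n), Differentiable ℝ f →
      (∀ q, fderiv ℝ f q v = 0) → ∫ q, f q * fderiv ℝ u q v = 0 := by
    intro f v hf hfv
    have := integral_mul_fderiv_eq_neg_fderiv_mul_of_integrable (μ := (volume : Measure (Pt m n)))
      (f := f) (g := u) (v := v) (by simp [hfv]) (hint f v hf.continuous)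
      ((hf.continuous.mul hu.continuous).integrable_of_hasCompactSupport hs.mul_left)
      (fun q _ => hf q) (fun q _ => hu.differentiable (by simp) q)
    simpa [hfv] using this
  have i1 : Integrable fun q => fderiv ℝ u q ((Pi.single j 1, 0) : Pt m n) := by
    simpa using hint (fun _ => 1) (Pi.single j 1, 0) continuous_const
  have d2 : ∀ k : Fin n, Differentiable ℝ fun q : Pt m n => ∑ i, A k i j * q.1 i := by
    intro k; fun_prop
  have i2 : ∀ k : Fin n, Integrable fun q : Pt m n =>
      (∑ i, A k i j * q.1 i) * fderiv ℝ u q (0, Pi.single k 1) :=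
    fun k => hint _ _ (d2 k).continuous
  unfold Xvf
  rw [integral_add i1 ((integrable_finsetSum _ fun k _ => i2 k).const_mul _),
    integral_const_mul, integral_finsetSum _ fun k _ => i2 k]
  have e1 : ∫ q, fderiv ℝ u q ((Pi.single j 1, 0) : Pt m n) = 0 := by
    simpa using key (fun _ => 1) (Pi.single j 1, 0) (differentiable_const _) (by simp)
  rw [e1, Finset.sum_eq_zero, mul_zero, add_zero]
  intro k _
  refine key _ _ (d2 k) fun q => ?_
  have h := ((d2 k) q).hasFDerivAt.hasLineDerivAt ((0, Pi.single k 1) : Pt m n)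
  refine h.unique ?_
  unfold HasLineDerivAt
  simpa using hasDerivAt_const (0 : ℝ) (∑ i, A k i j * q.1 i)

variable {A}

/-- Integration by parts against the kernel field. -/
lemma integral_Xvf_Kj (hA : IsHType m n A) {e : ℝ} (he : 0 < e) {v : Pt m n → ℝ}
    (hv : ContDiff ℝ (⊤ : ℕ∞) v) (hs : HasCompactSupport v) :
    ∫ q, ∑ j, Xvf m n A j v q * Kj A e j q
      = -(m * ∫ q, v q * (e * Dn e q ^ (-(Qh m n + 2) / 4))) := by
  have h1 : ∀ j, ∫ q, (Xvf m n A j v q * Kj A e j q + v q * Xvf m n A j (Kj A e j) q) = 0 := by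
    intro j
    rw [← integral_Xvf A (hv.mul (contDiff_Kj (A := A) he j)) hs.mul_right j]
    refine integral_congr_ae (Eventually.of_forall fun q => ?_)
    exact (Xvf_mul A (hv.differentiable (by simp) q)
      ((contDiff_Kj (A := A) he j).differentiable (by simp) q) j).symm
  have i1 : ∀ j, Integrable fun q => Xvf m n A j v q * Kj A e j q := fun j =>
    ((continuous_Xvf A hv j).mul (contDiff_Kj (A := A) he j).continuous).integrable_of_hasCompactSupport
      (hasCompactSupport_Xvf A hs j).mul_right
  have i2 : ∀ j, Integrable fun q => v q * Xvf m n A j (Kj A e j) q := fun j =>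
    (hv.continuous.mul (continuous_Xvf A (contDiff_Kj (A := A) he j) j)).integrable_of_hasCompactSupport
      hs.mul_right
  rw [integral_finsetSum _ fun j _ => i1 j]
  have h2 : ∀ j, ∫ q, Xvf m n A j v q * Kj A e j q = -∫ q, v q * Xvf m n A j (Kj A e j) q := by
    intro j
    have := h1 j
    rw [integral_add (i1 j) (i2 j)] at this
    linarith
  simp only [h2, Finset.sum_neg_distrib]
  rw [← integral_finsetSum _ fun j _ => i2 j, ← integral_const_mul]
  congr 1
  refine integral_congr_ae (Eventually.of_forall fun q => ?_)
  simp only [← Finset.mul_sum, div_Kj hA he]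
  ring

end vectorFields

/-! ### Dilations, group law and the representation formula -/

section representation

variable {m n : ℕ}

/-- The anisotropic dilation `(x, t) ↦ (ε x, ε² t)`. -/
def dil (m n : ℕ) (ε : ℝ) : Pt m n →ₗ[ℝ] Pt m n :=
  (ε • LinearMap.id).prodMap (ε ^ 2 • LinearMap.id)

lemma dil_apply (ε : ℝ) (q : Pt m n) : dil m n ε q = (ε • q.1, ε ^ 2 • q.2) := rfl

lemma det_dil (ε : ℝ) : LinearMap.det (dil m n ε) = ε ^ (m + 2 * n) := by
  rw [dil, LinearMap.det_prodMap]
  simp only [LinearMap.det_smul, LinearMap.det_id, Module.finrank_fin_fun, mul_one]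
  rw [← pow_mul, ← pow_add]

lemma integral_comp_dil {ε : ℝ} (hε : 0 < ε) {f : Pt m n → ℝ} (hf : Continuous f) :
    ∫ q, f (dil m n ε q) = (ε ^ (m + 2 * n))⁻¹ * ∫ q, f q := by
  have hdet : LinearMap.det (dil m n ε) ≠ 0 := by rw [det_dil]; positivity
  have h1 := Measure.map_linearMap_addHaar_eq_smul_addHaar (volume : Measure (Pt m n)) hdet
  have hmeas : AEMeasurable (dil m n ε) (volume : Measure (Pt m n)) :=
    (LinearMap.continuous_of_finiteDimensional _).aemeasurable
  rw [← integral_map hmeas hf.aestronglyMeasurable, h1, integral_smul_measure, det_dil,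
    ENNReal.toReal_ofReal (abs_nonneg _), abs_of_pos (by positivity), smul_eq_mul]

lemma Dn_dil (ε : ℝ) (q : Pt m n) : Dn (ε ^ 2) (dil m n ε q) = ε ^ 4 * Dn 1 q := by
  simp only [Dn, dil_apply, Pi.smul_apply, smul_eq_mul, mul_pow, ← Finset.mul_sum]
  ring

/-- The total mass of the approximate identity `ε² Dn (ε²) ^ (-(Q+2)/4)`. -/
def mass (m n : ℕ) : ℝ := ∫ q : Pt m n, Dn 1 q ^ (-(Qh m n + 2) / 4)

lemma mass_pos (hm : 1 ≤ m) (hn : 1 ≤ n) : 0 < mass m n := by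
  have hi := integrable_Dn_one hm hn (s := Qh m n + 2) (by linarith)
  have hpos : ∀ q : Pt m n, 0 < Dn 1 q ^ (-(Qh m n + 2) / 4) :=
    fun q => Real.rpow_pos_of_pos (Dn_pos one_pos q) _
  refine (integral_pos_iff_support_of_nonneg (fun q => (hpos q).le) hi).2 ?_
  have : Function.support (fun q : Pt m n => Dn 1 q ^ (-(Qh m n + 2) / 4)) = Set.univ :=
    Set.eq_univ_of_forall fun q => (hpos q).ne'
  rw [this]
  exact Measure.measure_univ_pos.2 (NeZero.ne _)

/-- The dilation `(x, t) ↦ (ε x, ε² t)` turns the approximate identity into a fixed density. -/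
lemma integral_dilated {ε : ℝ} (hε : 0 < ε) {v : Pt m n → ℝ} (hv : Continuous v) :
    ∫ q, v q * (ε ^ 2 * Dn (ε ^ 2) q ^ (-(Qh m n + 2) / 4))
      = ∫ q, v (dil m n ε q) * Dn 1 q ^ (-(Qh m n + 2) / 4) := by
  have hc : Continuous fun q : Pt m n =>
      v q * (ε ^ 2 * Dn (ε ^ 2) q ^ (-(Qh m n + 2) / 4)) :=
    hv.mul (continuous_const.mul ((continuous_Dn _).rpow_const fun q =>
      Or.inl (Dn_pos (by positivity) q).ne'))
  have h := integral_comp_dil hε hc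
  have hne : ε ^ (m + 2 * n) ≠ 0 := by positivity
  rw [inv_mul_eq_div, eq_div_iff hne] at h
  rw [← h, mul_comm, ← integral_const_mul]
  refine integral_congr_ae (Eventually.of_forall fun q => ?_)
  simp only [Dn_dil]
  rw [Real.mul_rpow (by positivity) (Dn_nonneg _ _)]
  have : (ε ^ 4) ^ (-(Qh m n + 2) / 4) = (ε ^ (m + 2 * n))⁻¹ * (ε ^ 2)⁻¹ := by
    rw [← Real.rpow_natCast ε 4, ← Real.rpow_mul hε.le, ← mul_inv, ← pow_add,
      ← Real.rpow_natCast, ← Real.rpow_neg hε.le]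
    congr 1
    unfold Qh; push_cast; ring
  rw [this]
  field_simp

/-- The divergence of the regularized kernel field is an approximate identity at the origin. -/
lemma tendsto_mass (hm : 1 ≤ m) (hn : 1 ≤ n) {v : Pt m n → ℝ} (hv : Continuous v)
    (hs : HasCompactSupport v) {ε : ℕ → ℝ} (hε : ∀ k, 0 < ε k) (hlim : Tendsto ε atTop (nhds 0)) :
    Tendsto (fun k => ∫ q, v q * (ε k ^ 2 * Dn (ε k ^ 2) q ^ (-(Qh m n + 2) / 4))) atTop
      (nhds (v 0 * mass m n)) := by
  obtain ⟨M, hM⟩ := hv.bounded_above_of_compact_support hs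
  simp only [integral_dilated (hε _) hv]
  rw [mass, ← integral_const_mul]
  have hi := integrable_Dn_one hm hn (s := Qh m n + 2) (by linarith)
  refine tendsto_integral_of_dominated_convergence
    (fun q => M * Dn 1 q ^ (-(Qh m n + 2) / 4)) (fun k => ?_) (hi.const_mul M) (fun k => ?_) ?_
  · exact ((hv.comp (LinearMap.continuous_of_finiteDimensional _)).measurable.mul
      (measurable_Dn_rpow _ _)).aestronglyMeasurable
  · refine Eventually.of_forall fun q => ?_
    have : 0 ≤ Dn 1 q ^ (-(Qh m n + 2) / 4) := Real.rpow_nonneg (Dn_nonneg _ _) _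
    rw [norm_mul, Real.norm_of_nonneg this]
    gcongr
    exact hM _
  · refine Eventually.of_forall fun q => ?_
    refine Tendsto.mul_const _ ?_
    have : Tendsto (fun k => dil m n (ε k) q) atTop (nhds 0) := by
      simp only [dil_apply]
      have h1 : Tendsto (fun k => ε k • q.1) atTop (nhds ((0 : ℝ) • q.1)) := hlim.smul_const _
      have h2 : Tendsto (fun k => ε k ^ 2 • q.2) atTop (nhds (((0 : ℝ) ^ 2) • q.2)) :=
        (hlim.pow 2).smul_const _
      have h3 := h1.prodMk_nhds h2
      rwa [show (((0 : ℝ) • q.1, (0 : ℝ) ^ 2 • q.2) : Pt m n) = 0 by simp] at h3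
    exact (hv.tendsto 0).comp this

variable (A : Fin n → Matrix (Fin m) (Fin m) ℝ)

/-- The horizontal gradient as a vector of Euclidean space. -/
def gradV (u : Pt m n → ℝ) (q : Pt m n) : EuclideanSpace ℝ (Fin m) :=
  WithLp.toLp 2 fun j => Xvf m n A j u q

/-- The singular kernel field, homogeneous of degree `1 - Q` under the dilations. -/
def Kv (q : Pt m n) : EuclideanSpace ℝ (Fin m) := WithLp.toLp 2 fun j => Kj A 0 j q

/-- The scalar majorant `2 N^{1-Q}` of the kernel field. -/
def kap (m n : ℕ) (q : Pt m n) : ℝ := 2 * Dn 0 q ^ (-(Qh m n - 1) / 4)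

lemma kap_nonneg (q : Pt m n) : 0 ≤ kap m n q := by
  have := Real.rpow_nonneg (Dn_nonneg 0 q) (-(Qh m n - 1) / 4)
  unfold kap; positivity

lemma measurable_kap : Measurable (kap m n) := (measurable_Dn_rpow _ _).const_mul 2

lemma norm_gradV_sq (u : Pt m n → ℝ) (q : Pt m n) : ‖gradV A u q‖ ^ 2 = gradSq m n A u q := by
  simp [gradV, EuclideanSpace.norm_sq_eq, gradSq]

lemma norm_Kv_le {A} (hA : IsHType m n A) (q : Pt m n) : ‖Kv A q‖ ≤ kap m n q := by
  refine le_of_sq_le_sq ?_ (kap_nonneg q)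
  rw [EuclideanSpace.norm_sq_eq]
  simp only [Kv, Real.norm_eq_abs, sq_abs]
  exact sum_Kj_sq_le hA le_rfl q

lemma inner_eq_sum (a b : Fin m → ℝ) :
    inner ℝ (WithLp.toLp 2 a : EuclideanSpace ℝ (Fin m)) (WithLp.toLp 2 b) = ∑ j, a j * b j := by
  simp [PiLp.inner_apply, mul_comm]

lemma continuous_gradV {u : Pt m n → ℝ} (hu : ContDiff ℝ (⊤ : ℕ∞) u) :
    Continuous (gradV A u) :=
  (PiLp.continuous_toLp 2 _).comp (continuous_pi fun j => continuous_Xvf A hu j)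

lemma hasCompactSupport_gradV {u : Pt m n → ℝ} (hu : HasCompactSupport u) :
    HasCompactSupport (gradV A u) := by
  refine (hu.fderiv (𝕜 := ℝ)).mono fun q hq => ?_
  contrapose! hq
  simp only [Function.mem_support, not_not] at hq ⊢
  simp only [gradV, Xvf_eq, hq]
  rfl

lemma measurable_Kv : Measurable (Kv A) := by
  refine (WithLp.measurable_toLp 2 _).comp (measurable_pi_lambda _ fun j => ?_)
  exact (measurable_Dn_rpow _ _).mul (contDiff_Pj A 0 j).continuous.measurable

/-- `N^{1-Q}` is locally integrable and bounded at infinity. -/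
lemma integrable_mul_kap (hm : 1 ≤ m) (hn : 1 ≤ n) {E : Type*} [NormedAddCommGroup E]
    {g : Pt m n → E} (hg : Continuous g) (hs : HasCompactSupport g) :
    Integrable fun q => ‖g q‖ * kap m n q := by
  have hQ := Qh_pos hm hn
  obtain ⟨M, hM⟩ := hg.bounded_above_of_compact_support hs
  have hgi : Integrable fun q => ‖g q‖ := (hg.integrable_of_hasCompactSupport hs).norm
  have hmeas : AEStronglyMeasurable (fun q => ‖g q‖ * kap m n q) :=
    (hg.norm.measurable.mul measurable_kap).aestronglyMeasurable
  have hS : MeasurableSet {q : Pt m n | Dn 0 q < 1} :=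
    measurableSet_lt (continuous_Dn 0).measurable measurable_const
  rw [← integrableOn_univ, ← Set.union_compl_self {q : Pt m n | Dn 0 q < 1}]
  refine IntegrableOn.union ?_ ?_
  · have h1 := integrableOn_Dn_near hm hn (s := Qh m n - 1) (r := 1) (by linarith) (by linarith)
    refine (Integrable.const_mul h1 (2 * M)).mono' hmeas.restrict (Eventually.of_forall fun q => ?_)
    rw [Real.norm_of_nonneg (mul_nonneg (norm_nonneg _) (kap_nonneg q)), kap]
    have : 0 ≤ Dn 0 q ^ (-(Qh m n - 1) / 4) := Real.rpow_nonneg (Dn_nonneg _ _) _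
    calc _ ≤ M * (2 * Dn 0 q ^ (-(Qh m n - 1) / 4)) := by gcongr; exact hM q
      _ = _ := by ring
  · refine (hgi.const_mul 2).integrableOn.mono' hmeas.restrict
      ((ae_restrict_iff' hS.compl).2 (Eventually.of_forall fun q hq => ?_))
    rw [Real.norm_of_nonneg (mul_nonneg (norm_nonneg _) (kap_nonneg q)), kap]
    have h1 : 1 ≤ Dn 0 q := not_lt.1 hq
    have : Dn 0 q ^ (-(Qh m n - 1) / 4) ≤ 1 :=
      Real.rpow_le_one_of_one_le_of_nonpos h1 (by linarith)
    nlinarith [norm_nonneg (g q)]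

variable {A}

/-- The value at the origin of a test function as a singular integral of its horizontal
gradient, by letting `ε → 0` in the integration by parts. -/
lemma representation_zero (hm : 1 ≤ m) (hn : 1 ≤ n) (hA : IsHType m n A) {v : Pt m n → ℝ}
    (hv : ContDiff ℝ (⊤ : ℕ∞) v) (hs : HasCompactSupport v) :
    ∫ q, inner ℝ (gradV A v q) (Kv A q) = -(m * (v 0 * mass m n)) := by
  have hQ := Qh_pos hm hn
  set ε : ℕ → ℝ := fun k => 1 / ((k : ℝ) + 1)
  have hε : ∀ k, 0 < ε k := fun k => by positivity
  have hlim : Tendsto ε atTop (nhds 0) := tendsto_one_div_add_atTop_nhds_zero_nat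
  have hR := ((tendsto_mass hm hn hv.continuous hs hε hlim).const_mul (m : ℝ)).neg
  refine tendsto_nhds_unique (l := atTop) (f := fun k : ℕ =>
    ∫ q, ∑ j, Xvf m n A j v q * Kj A (ε k ^ 2) j q) ?_ ?_
  swap
  · simpa only [integral_Xvf_Kj hA (pow_pos (hε _) 2) hv hs] using hR
  have : Nonempty (Fin m) := ⟨⟨0, hm⟩⟩
  have z : ∀ᵐ q : Pt m n, q ≠ 0 := Measure.ae_ne volume 0
  refine tendsto_integral_of_dominated_convergence (fun q => ‖gradV A v q‖ * kap m n q)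
    (fun k => ?_) (integrable_mul_kap hm hn (continuous_gradV A hv) (hasCompactSupport_gradV A hs))
    (fun k => ?_) ?_
  · refine (Continuous.aestronglyMeasurable ?_)
    exact continuous_finsetSum _ fun j _ => (continuous_Xvf A hv j).mul
      (contDiff_Kj (A := A) (pow_pos (hε k) 2) j).continuous
  · filter_upwards [z] with q hq
    rw [← inner_eq_sum]
    refine (norm_inner_le_norm _ _).trans ?_
    refine mul_le_mul_of_nonneg_left ?_ (norm_nonneg _)
    refine le_of_sq_le_sq ?_ (kap_nonneg q)
    have h1 := sum_Kj_sq_le hA (sq_nonneg (ε k)) q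
    rw [EuclideanSpace.norm_sq_eq]
    simp only [Real.norm_eq_abs, sq_abs]
    refine h1.trans ?_
    have h2 : Dn (ε k ^ 2) q ^ (-(Qh m n - 1) / 4) ≤ Dn 0 q ^ (-(Qh m n - 1) / 4) :=
      Real.rpow_le_rpow_of_nonpos (Dn_zero_pos hq) (Dn_mono le_rfl (sq_nonneg _) q) (by linarith)
    have : 0 ≤ Dn (ε k ^ 2) q ^ (-(Qh m n - 1) / 4) := Real.rpow_nonneg (Dn_nonneg _ _) _
    unfold kap
    gcongr
  · filter_upwards [z] with q hq
    simp only [gradV, Kv, inner_eq_sum]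
    refine tendsto_finsetSum _ fun j _ => Tendsto.const_mul _ ?_
    have hc : ContinuousAt (fun e : ℝ => Kj A e j q) 0 := by
      unfold Kj
      refine ContinuousAt.mul (ContinuousAt.rpow_const ?_ (Or.inl (Dn_zero_pos hq).ne')) ?_
      · unfold Dn; fun_prop
      · unfold Pj; fun_prop
    have hl2 : Tendsto (fun k => ε k ^ 2) atTop (nhds 0) := by simpa using hlim.pow 2
    exact hc.tendsto.comp hl2

/-- The group law for which the fields `X_j` are left invariant. -/
def gmul (A : Fin n → Matrix (Fin m) (Fin m) ℝ) (x y : Pt m n) : Pt m n :=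
  (x.1 + y.1, x.2 + y.2 + fun k => (1 / 2) * ∑ j, rowA A k j x.1 * y.1 j)

lemma gmul_zero (x : Pt m n) : gmul A x 0 = x := by
  refine Prod.ext (by simp [gmul]) (by funext k; simp [gmul])

lemma rowA_add (k : Fin n) (j : Fin m) (x y : Fin m → ℝ) :
    rowA A k j (x + y) = rowA A k j x + rowA A k j y := by
  simp [rowA, mul_add, Finset.sum_add_distrib]

lemma rowA_neg (k : Fin n) (j : Fin m) (x : Fin m → ℝ) :
    rowA A k j (-x) = -rowA A k j x := by
  simp [rowA]

lemma gmul_neg_cancel (hA : IsHType m n A) (x y : Pt m n) : gmul A (-x) (gmul A x y) = y := by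
  refine Prod.ext (by simp [gmul]) ?_
  funext k
  simp only [gmul, Prod.fst_neg, Prod.snd_neg, Pi.add_apply, Pi.neg_apply, rowA_neg, mul_add,
    Finset.sum_add_distrib, neg_mul, Finset.sum_neg_distrib, sum_rowA_mul_self hA]
  ring

lemma contDiff_gmul : ContDiff ℝ (⊤ : ℕ∞) fun z : Pt m n × Pt m n => gmul A z.1 z.2 := by
  unfold gmul rowA; fun_prop

lemma continuous_gmul : Continuous fun z : Pt m n × Pt m n => gmul A z.1 z.2 :=
  contDiff_gmul.continuous

lemma continuous_gmul_left (x : Pt m n) : Continuous (gmul A x) :=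
  continuous_gmul.comp (by fun_prop : Continuous fun y : Pt m n => (x, y))

/-- Left translation as a homeomorphism. -/
def gHomeo (hA : IsHType m n A) (x : Pt m n) : Pt m n ≃ₜ Pt m n where
  toFun := gmul A x
  invFun := gmul A (-x)
  left_inv := gmul_neg_cancel hA x
  right_inv y := by simpa using gmul_neg_cancel hA (-x) y
  continuous_toFun := continuous_gmul_left x
  continuous_invFun := continuous_gmul_left (-x)

/-- Left translations map the integral lines of `X_j` to integral lines of `X_j`. -/
lemma gmul_line (x y : Pt m n) (j : Fin m) (τ : ℝ) :
    gmul A x (y + τ • hdir A j y) = gmul A x y + τ • hdir A j (gmul A x y) := by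
  refine Prod.ext ?_ ?_
  · simp [gmul, hdir, add_assoc]
  · funext k
    have : ∑ l, rowA A k l x.1 * (τ * (Pi.single j 1 : Fin m → ℝ) l) = τ * rowA A k j x.1 := by
      simp [Pi.single_apply, mul_comm]
    simp only [gmul, hdir, Prod.fst_add, Prod.snd_add, Prod.smul_fst, Prod.smul_snd, Pi.add_apply,
      Pi.smul_apply, smul_eq_mul, mul_add, Finset.sum_add_distrib, rowA_add, this]
    ring

/-- The horizontal gradient commutes with left translations. -/
lemma gradV_comp {u : Pt m n → ℝ} (hu : ContDiff ℝ (⊤ : ℕ∞) u) (x y : Pt m n) :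
    gradV A (fun q => u (gmul A x q)) y = gradV A u (gmul A x y) := by
  unfold gradV
  congr 1
  funext j
  have hd : Differentiable ℝ fun q => u (gmul A x q) :=
    (hu.comp (contDiff_gmul.comp (by fun_prop :
      ContDiff ℝ (⊤ : ℕ∞) fun y : Pt m n => (x, y)))).differentiable (by simp)
  refine Xvf_of_hasDerivAt A (hd y) j ?_
  simp only [gmul_line]
  exact hasDerivAt_line A (hu.differentiable (by simp) _) j

/-- Lebesgue measure is invariant under left translations. -/
lemma measurePreserving_gmul_left (x : Pt m n) :
    MeasurePreserving (gmul A x) (volume : Measure (Pt m n)) volume := by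
  refine MeasurePreserving.skew_product (μa := volume) (μb := volume) (μc := volume)
    (μd := volume) (f := fun a => x.1 + a)
    (g := fun a b => x.2 + b + fun k => (1 / 2) * ∑ j, rowA A k j x.1 * a j)
    (measurePreserving_add_left volume x.1) ?_ ?_
  · exact (by fun_prop : Continuous _).measurable
  · refine Eventually.of_forall fun a => ?_
    exact ((measurePreserving_add_right volume _).comp (measurePreserving_add_left volume _)).map_eq

/-- Lebesgue measure is invariant under right translations. -/
lemma measurePreserving_gmul_right (y : Pt m n) :
    MeasurePreserving (fun x => gmul A x y) (volume : Measure (Pt m n)) volume := by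
  refine MeasurePreserving.skew_product (μa := volume) (μb := volume) (μc := volume)
    (μd := volume) (f := fun a => a + y.1)
    (g := fun a b => b + y.2 + fun k => (1 / 2) * ∑ j, rowA A k j a * y.1 j)
    (measurePreserving_add_right volume y.1) ?_ ?_
  · unfold rowA
    exact (by fun_prop : Continuous _).measurable
  · refine Eventually.of_forall fun a => ?_
    exact ((measurePreserving_add_right volume _).comp
      (measurePreserving_add_right volume _)).map_eq

/-- The representation formula at an arbitrary point, by left invariance. -/
lemma representation (hm : 1 ≤ m) (hn : 1 ≤ n) (hA : IsHType m n A) {u : Pt m n → ℝ}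
    (hu : ContDiff ℝ (⊤ : ℕ∞) u) (hs : HasCompactSupport u) (x : Pt m n) :
    Integrable (fun y => ‖gradV A u (gmul A x y)‖ * kap m n y) ∧
    u x = -(m * mass m n)⁻¹ * ∫ y, inner ℝ (gradV A u (gmul A x y)) (Kv A y) := by
  have hu' : ContDiff ℝ (⊤ : ℕ∞) fun q => u (gmul A x q) :=
    hu.comp (contDiff_gmul.comp (by fun_prop : ContDiff ℝ (⊤ : ℕ∞) fun y : Pt m n => (x, y)))
  have hs' : HasCompactSupport fun q => u (gmul A x q) := hs.comp_homeomorph (gHomeo hA x)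
  refine ⟨?_, ?_⟩
  · simpa only [gradV_comp hu] using
      integrable_mul_kap hm hn (continuous_gradV A hu') (hasCompactSupport_gradV A hs')
  · have h := representation_zero hm hn hA hu' hs'
    simp only [gradV_comp hu, gmul_zero] at h
    have h1 := mass_pos hm hn
    have h2 : (0 : ℝ) < m := by exact_mod_cast hm
    rw [h]
    field_simp

end representation

/-! ### Young inequality -/

section young

variable {m n : ℕ} {A : Fin n → Matrix (Fin m) (Fin m) ℝ}

/-- Young's inequality on the group: `‖F * k‖_q ≤ ‖F‖_2 ‖k‖_s` for `1/s = 1/q + 1/2`. Left and right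
translations both preserve Lebesgue measure, so the Euclidean proof by Hölder applies. -/
lemma young {q : ℝ} (hq : 2 ≤ q) {F k : Pt m n → ENNReal} (hF : Measurable F)
    (hk : Measurable k) :
    ∫⁻ x, (∫⁻ y, F (gmul A x y) * k y) ^ q
      ≤ (∫⁻ y, F y ^ (2 : ℝ)) ^ (q / 2) * (∫⁻ y, k y ^ (2 * q / (q + 2))) ^ (1 + q / 2) := by
  have hq0 : 0 < q := by linarith
  set s := 2 * q / (q + 2) with hs
  set I := ∫⁻ y, F y ^ (2 : ℝ)
  set J := ∫⁻ y, k y ^ s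
  have hs0 : 0 < s := by positivity
  have hg : Measurable fun z : Pt m n × Pt m n => gmul A z.1 z.2 := continuous_gmul.measurable
  have hgx : ∀ x : Pt m n, Measurable (gmul A x) := fun x => (continuous_gmul_left x).measurable
  have hF2 : Measurable fun y => F y ^ (2 : ℝ) := hF.pow_const _
  have hks : Measurable fun y => k y ^ s := hk.pow_const _
  have hI : ∀ x, ∫⁻ y, F (gmul A x y) ^ (2 : ℝ) = I := fun x =>
    (measurePreserving_gmul_left x).lintegral_comp hF2
  have hw : 0 ≤ 1 / 2 - 1 / q := by
    rw [sub_nonneg]; exact one_div_le_one_div_of_le two_pos hq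
  -- Hölder for the splitting `F k = (F² kˢ)^(1/q) (F²)^(1/2-1/q) (kˢ)^(1/2)`.
  have key : ∀ x, (∫⁻ y, F (gmul A x y) * k y) ^ q
      ≤ (∫⁻ y, F (gmul A x y) ^ (2 : ℝ) * k y ^ s) * (I ^ (q / 2 - 1) * J ^ (q / 2)) := by
    intro x
    have hFx : Measurable fun y => F (gmul A x y) ^ (2 : ℝ) := hF2.comp (hgx x)
    have h := ENNReal.lintegral_prod_norm_pow_le (μ := (volume : Measure (Pt m n)))
      (Finset.univ : Finset (Fin 3))
      (f := ![fun y => F (gmul A x y) ^ (2 : ℝ) * k y ^ s, fun y => F (gmul A x y) ^ (2 : ℝ),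
        fun y => k y ^ s]) (p := ![1 / q, 1 / 2 - 1 / q, 1 / 2])
      (by
        intro i _
        fin_cases i
        · exact (hFx.mul hks).aemeasurable
        · exact hFx.aemeasurable
        · exact hks.aemeasurable)
      (by simp [Fin.sum_univ_three]; ring)
      (by
        intro i _
        fin_cases i
        · simp; positivity
        · simpa using hw
        · simp)
    simp only [Fin.prod_univ_three, Matrix.cons_val_zero, Matrix.cons_val_one,
      Matrix.cons_val] at h
    have e : ∀ y, (F (gmul A x y) ^ (2 : ℝ) * k y ^ s) ^ (1 / q)
        * (F (gmul A x y) ^ (2 : ℝ)) ^ (1 / 2 - 1 / q) * (k y ^ s) ^ ((1 : ℝ) / 2)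
        = F (gmul A x y) * k y := by
      intro y
      rw [ENNReal.mul_rpow_of_nonneg _ _ (by positivity), ← ENNReal.rpow_mul, ← ENNReal.rpow_mul,
        ← ENNReal.rpow_mul, ← ENNReal.rpow_mul]
      have e1 : F (gmul A x y) ^ (2 * (1 / q)) * F (gmul A x y) ^ (2 * (1 / 2 - 1 / q))
          = F (gmul A x y) := by
        rw [← ENNReal.rpow_add_of_nonneg _ _ (by positivity) (by positivity)]
        convert ENNReal.rpow_one _ using 2
        ring
      have e2 : k y ^ (s * (1 / q)) * k y ^ (s * (1 / 2)) = k y := by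
        rw [← ENNReal.rpow_add_of_nonneg _ _ (by positivity) (by positivity)]
        convert ENNReal.rpow_one _ using 2
        rw [hs]; field_simp; ring
      calc _ = (F (gmul A x y) ^ (2 * (1 / q)) * F (gmul A x y) ^ (2 * (1 / 2 - 1 / q)))
            * (k y ^ (s * (1 / q)) * k y ^ (s * (1 / 2))) := by ring
        _ = _ := by rw [e1, e2]
    simp only [e, hI] at h
    refine (ENNReal.rpow_le_rpow h hq0.le).trans_eq ?_
    rw [ENNReal.mul_rpow_of_nonneg _ _ hq0.le, ENNReal.mul_rpow_of_nonneg _ _ hq0.le,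
      ← ENNReal.rpow_mul, ← ENNReal.rpow_mul, ← ENNReal.rpow_mul, one_div_mul_cancel hq0.ne',
      ENNReal.rpow_one, mul_assoc]
    congr 3
    · field_simp
    · ring
  calc _ ≤ ∫⁻ x, (∫⁻ y, F (gmul A x y) ^ (2 : ℝ) * k y ^ s) * (I ^ (q / 2 - 1) * J ^ (q / 2)) :=
        lintegral_mono key
    _ = (∫⁻ x, ∫⁻ y, F (gmul A x y) ^ (2 : ℝ) * k y ^ s) * (I ^ (q / 2 - 1) * J ^ (q / 2)) := by
        refine lintegral_mul_const _ (Measurable.lintegral_prod_right'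
          (f := fun z : Pt m n × Pt m n => F (gmul A z.1 z.2) ^ (2 : ℝ) * k z.2 ^ s) ?_)
        exact (hF2.comp hg).mul (hks.comp measurable_snd)
    _ = (I * J) * (I ^ (q / 2 - 1) * J ^ (q / 2)) := by
        congr 1
        rw [lintegral_lintegral_swap]
        · have : ∀ y, ∫⁻ x, F (gmul A x y) ^ (2 : ℝ) * k y ^ s = I * k y ^ s := fun y => by
            rw [lintegral_mul_const]
            · congr 1
              exact (measurePreserving_gmul_right y).lintegral_comp hF2
            · exact hF2.comp (measurePreserving_gmul_right y).measurable
          simp only [this]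
          exact lintegral_const_mul _ hks
        · exact ((hF2.comp hg).mul (hks.comp measurable_snd)).aemeasurable
    _ = (I ^ (1 : ℝ) * I ^ (q / 2 - 1)) * (J ^ (1 : ℝ) * J ^ (q / 2)) := by
        rw [ENNReal.rpow_one, ENNReal.rpow_one]; ring
    _ = _ := by
        rw [← ENNReal.rpow_add_of_nonneg _ _ one_pos.le (by linarith),
          ← ENNReal.rpow_add_of_nonneg _ _ one_pos.le (by positivity)]
        congr 2
        ring

end young

/-! ### Truncated kernels -/

section truncation

variable {m n : ℕ} {A : Fin n → Matrix (Fin m) (Fin m) ℝ}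

/-- The scalar majorant of the kernel, truncated to the set `S`. -/
def kE (m n : ℕ) (S : Set (Pt m n)) : Pt m n → ENNReal :=
  S.indicator fun y => ENNReal.ofReal (kap m n y)

/-- The homogeneous ball of radius `r ^ (1/4)` around the origin. -/
def gball (m n : ℕ) (r : ℝ) : Set (Pt m n) := {y | Dn 0 y < r}

lemma measurableSet_gball (r : ℝ) : MeasurableSet (gball m n r) :=
  measurableSet_lt (continuous_Dn 0).measurable measurable_const

lemma measurable_kE {S : Set (Pt m n)} (hS : MeasurableSet S) : Measurable (kE m n S) :=
  (measurable_kap.ennreal_ofReal).indicator hS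

lemma kE_rpow (S : Set (Pt m n)) {s : ℝ} (hs : 0 < s) (y : Pt m n) :
    kE m n S y ^ s = S.indicator
      (fun y => ENNReal.ofReal (2 ^ s * Dn 0 y ^ (-(s * (Qh m n - 1)) / 4))) y := by
  unfold kE
  by_cases hy : y ∈ S
  · simp only [Set.indicator_of_mem hy]
    rw [ENNReal.ofReal_rpow_of_nonneg (kap_nonneg y) hs.le, kap,
      Real.mul_rpow two_pos.le (Real.rpow_nonneg (Dn_nonneg 0 y) _),
      ← Real.rpow_mul (Dn_nonneg 0 y)]
    congr 3
    ring
  · simp only [Set.indicator_of_notMem hy]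
    exact ENNReal.zero_rpow_of_pos hs

lemma lintegral_kE_ne_top {S : Set (Pt m n)} (hS : MeasurableSet S) {s : ℝ} (hs : 0 < s)
    (h : IntegrableOn (fun y : Pt m n => Dn 0 y ^ (-(s * (Qh m n - 1)) / 4)) S) :
    ∫⁻ y, kE m n S y ^ s ≠ ⊤ := by
  simp only [kE_rpow S hs]
  rw [lintegral_indicator hS]
  have := (h.const_mul (2 ^ s)).lintegral_lt_top
  exact this.ne

/-- Away from the origin the kernel lies in `L^s` for every `s > Q/(Q-1)`. -/
lemma lintegral_kE_far_ne_top (hm : 1 ≤ m) (hn : 1 ≤ n) {r s : ℝ} (hr : 0 < r) (hs : 0 < s)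
    (h : Qh m n < s * (Qh m n - 1)) : ∫⁻ y, kE m n (gball m n r)ᶜ y ^ s ≠ ⊤ := by
  refine lintegral_kE_ne_top (measurableSet_gball r).compl hs ?_
  have : (gball m n r)ᶜ = {q | r ≤ Dn 0 q} := by ext; simp [gball]
  rw [this]
  exact integrableOn_Dn_far hm hn hr h

/-- For `s < Q/(Q-1)` the kernel is locally in `L^s`, so its `L^s` mass on small balls vanishes. -/
lemma tendsto_lintegral_kE_near (hm : 1 ≤ m) (hn : 1 ≤ n) {s : ℝ} (hs : 0 < s)
    (h : s * (Qh m n - 1) < Qh m n) :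
    Tendsto (fun r => ∫⁻ y, kE m n (gball m n r) y ^ s) (nhdsWithin 0 (Set.Ioi 0)) (nhds 0) := by
  have hQ := Qh_pos hm hn
  have : Nonempty (Fin m) := ⟨⟨0, hm⟩⟩
  have z : ∀ᵐ q : Pt m n, q ≠ 0 := Measure.ae_ne volume 0
  rw [← lintegral_zero (α := Pt m n) (μ := volume)]
  refine tendsto_lintegral_filter_of_dominated_convergence (fun y => kE m n (gball m n 1) y ^ s)
    (Eventually.of_forall fun r => (measurable_kE (measurableSet_gball r)).pow_const s) ?_
    (lintegral_kE_ne_top (measurableSet_gball 1) hs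
      (integrableOn_Dn_near hm hn (mul_pos hs (by linarith)) h)) ?_
  · filter_upwards [nhdsWithin_le_nhds (Iio_mem_nhds (zero_lt_one (α := ℝ)))] with r hr
    refine Eventually.of_forall fun y => ENNReal.rpow_le_rpow ?_ hs.le
    refine Set.indicator_le_indicator_of_subset (fun q hq => ?_) (fun _ => zero_le) y
    exact lt_trans (show Dn 0 q < r from hq) hr
  · filter_upwards [z] with q hq
    refine tendsto_const_nhds.congr' ?_
    filter_upwards [nhdsWithin_le_nhds (Iio_mem_nhds (Dn_zero_pos hq))] with r hr
    have : q ∉ gball m n r := fun h' => lt_asymm (show Dn 0 q < r from h') hr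
    rw [kE, Set.indicator_of_notMem this, ENNReal.zero_rpow_of_pos hs]

/-- The singular integral of the representation formula with kernel truncated to `S`. -/
def trunc (A : Fin n → Matrix (Fin m) (Fin m) ℝ) (S : Set (Pt m n)) (v : Pt m n → ℝ)
    (x : Pt m n) : ℝ :=
  ∫ y, inner ℝ (gradV A v (gmul A x y)) (S.indicator (Kv A) y)

lemma enorm_indicator_Kv_le (hA : IsHType m n A) (S : Set (Pt m n)) (y : Pt m n) :
    ‖S.indicator (Kv A) y‖ₑ ≤ kE m n S y := by
  rw [enorm_indicator_eq_indicator_enorm]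
  refine Set.indicator_le_indicator ?_
  rw [← ofReal_norm]
  exact ENNReal.ofReal_le_ofReal (norm_Kv_le hA y)

lemma measurable_inner_trunc {S : Set (Pt m n)} (hS : MeasurableSet S) {v : Pt m n → ℝ}
    (hv : ContDiff ℝ (⊤ : ℕ∞) v) :
    Measurable fun z : Pt m n × Pt m n =>
      (inner ℝ (gradV A v (gmul A z.1 z.2)) (S.indicator (Kv A) z.2) : ℝ) :=
  ((continuous_gradV A hv).measurable.comp continuous_gmul.measurable).inner
    (((measurable_Kv A).indicator hS).comp measurable_snd)

lemma integrable_trunc (hm : 1 ≤ m) (hn : 1 ≤ n) (hA : IsHType m n A) {S : Set (Pt m n)}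
    (hS : MeasurableSet S) {v : Pt m n → ℝ} (hv : ContDiff ℝ (⊤ : ℕ∞) v)
    (hs : HasCompactSupport v) (x : Pt m n) :
    Integrable fun y => (inner ℝ (gradV A v (gmul A x y)) (S.indicator (Kv A) y) : ℝ) := by
  refine (representation hm hn hA hv hs x).1.mono'
    ((measurable_inner_trunc hS hv).comp measurable_prodMk_left).aestronglyMeasurable
    (Eventually.of_forall fun y => ?_)
  refine (norm_inner_le_norm _ _).trans (mul_le_mul_of_nonneg_left ?_ (norm_nonneg _))
  exact (norm_indicator_le_norm_self _ _).trans (norm_Kv_le hA y)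

lemma measurable_trunc {S : Set (Pt m n)} (hS : MeasurableSet S) {v : Pt m n → ℝ}
    (hv : ContDiff ℝ (⊤ : ℕ∞) v) : Measurable (trunc A S v) :=
  (StronglyMeasurable.integral_prod_right
    (measurable_inner_trunc hS hv).stronglyMeasurable).measurable

lemma enorm_trunc_le (hA : IsHType m n A) (S : Set (Pt m n)) (v : Pt m n → ℝ) (x : Pt m n) :
    ‖trunc A S v x‖ₑ ≤ ∫⁻ y, ‖gradV A v (gmul A x y)‖ₑ * kE m n S y := by
  refine (enorm_integral_le_lintegral_enorm _).trans (lintegral_mono fun y => ?_)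
  refine le_trans ?_ (mul_le_mul_right (enorm_indicator_Kv_le hA S y) _)
  rw [← ofReal_norm, ← ofReal_norm, ← ofReal_norm,
    ← ENNReal.ofReal_mul (norm_nonneg _)]
  exact ENNReal.ofReal_le_ofReal (norm_inner_le_norm _ _)

lemma gradV_sub {u v : Pt m n → ℝ} (hu : ContDiff ℝ (⊤ : ℕ∞) u) (hv : ContDiff ℝ (⊤ : ℕ∞) v)
    (q : Pt m n) : gradV A (fun q => u q - v q) q = gradV A u q - gradV A v q := by
  simp only [gradV, Xvf_sub A (hu.differentiable (by simp) q) (hv.differentiable (by simp) q)]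
  rfl

lemma trunc_sub (hm : 1 ≤ m) (hn : 1 ≤ n) (hA : IsHType m n A) {S : Set (Pt m n)}
    (hS : MeasurableSet S) {u v : Pt m n → ℝ} (hu : ContDiff ℝ (⊤ : ℕ∞) u)
    (hus : HasCompactSupport u) (hv : ContDiff ℝ (⊤ : ℕ∞) v) (hvs : HasCompactSupport v)
    (x : Pt m n) : trunc A S (fun q => u q - v q) x = trunc A S u x - trunc A S v x := by
  simp only [trunc, gradV_sub hu hv, inner_sub_left]
  exact integral_sub (integrable_trunc hm hn hA hS hu hus x) (integrable_trunc hm hn hA hS hv hvs x)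

/-- A test function is controlled by the two halves of its truncated representation. -/
lemma enorm_le_trunc_add (hm : 1 ≤ m) (hn : 1 ≤ n) (hA : IsHType m n A) {S : Set (Pt m n)}
    (hS : MeasurableSet S) {v : Pt m n → ℝ} (hv : ContDiff ℝ (⊤ : ℕ∞) v)
    (hs : HasCompactSupport v) (x : Pt m n) :
    ‖v x‖ₑ ≤ ‖(m * mass m n)⁻¹‖ₑ * (‖trunc A Sᶜ v x‖ₑ
      + ∫⁻ y, ‖gradV A v (gmul A x y)‖ₑ * kE m n S y) := by
  have h := (representation hm hn hA hv hs x).2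
  have h2 : ∫ y, inner ℝ (gradV A v (gmul A x y)) (Kv A y)
      = trunc A Sᶜ v x + trunc A S v x := by
    unfold trunc
    rw [← integral_add (integrable_trunc hm hn hA hS.compl hv hs x)
      (integrable_trunc hm hn hA hS hv hs x)]
    refine integral_congr_ae (Eventually.of_forall fun y => ?_)
    simp only [← inner_add_right, Set.indicator_compl_add_self_apply]
  rw [h, h2, enorm_mul, enorm_neg]
  gcongr
  exact (enorm_add_le _ _).trans (by gcongr; exact enorm_trunc_le hA S v x)

/-- The truncated integral at `x` is the pairing of the gradient with a fixed translated field. -/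
lemma trunc_eq (hA : IsHType m n A) (S : Set (Pt m n)) (v : Pt m n → ℝ) (x : Pt m n) :
    trunc A S v x = ∫ z, inner ℝ (gradV A v z) (S.indicator (Kv A) (gmul A (-x) z)) := by
  have h := (measurePreserving_gmul_left (A := A) x).integral_comp
    (gHomeo hA x).measurableEmbedding
    (fun z => (inner ℝ (gradV A v z) (S.indicator (Kv A) (gmul A (-x) z)) : ℝ))
  rw [← h]
  simp only [gmul_neg_cancel hA]
  rfl

/-- The translated field of `trunc_eq` is in `L²`, so truncations are continuous functionals of the
gradient for the weak topology. -/
lemma memLp_kernel (hA : IsHType m n A) {S : Set (Pt m n)} (hS : MeasurableSet S)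
    (h : ∫⁻ y, kE m n S y ^ (2 : ℝ) ≠ ⊤) (x : Pt m n) :
    MemLp (fun z => S.indicator (Kv A) (gmul A (-x) z)) 2 := by
  have hm : Measurable (S.indicator (Kv A)) := (measurable_Kv A).indicator hS
  have h1 : MemLp (S.indicator (Kv A)) 2 := by
    refine ⟨hm.aestronglyMeasurable, ?_⟩
    rw [eLpNorm_lt_top_iff_lintegral_rpow_enorm_lt_top (by simp) (by simp)]
    simp only [ENNReal.toReal_ofNat]
    refine lt_of_le_of_lt (lintegral_mono fun y => ?_) h.lt_top
    exact ENNReal.rpow_le_rpow (enorm_indicator_Kv_le hA S y) two_pos.le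
  exact h1.comp_measurePreserving (measurePreserving_gmul_left (-x))

end truncation

/-! ### Weak compactness of gradients -/

section compactness

variable {m n : ℕ} {A : Fin n → Matrix (Fin m) (Fin m) ℝ}

/-- Weak sequential compactness of the unit ball of a separable Hilbert space, with the limit
left implicit. -/
lemma exists_weak_subseq {H : Type*} [NormedAddCommGroup H] [InnerProductSpace ℝ H]
    [TopologicalSpace.SeparableSpace H] (g : ℕ → H) (hg : ∀ k, ‖g k‖ ≤ 1) :
    ∃ φ : ℕ → ℕ, StrictMono φ ∧
      ∀ h : H, ∃ L : ℝ, Tendsto (fun k => (inner ℝ (g (φ k)) h : ℝ)) atTop (nhds L) := by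
  obtain ⟨L, -, φ, hφ, hL⟩ := WeakDual.isSeqCompact_closedBall ℝ H (0 : StrongDual ℝ H) 1
    (x := fun k => StrongDual.toWeakDual (innerSL ℝ (g k))) (fun k => by
      simpa using hg k)
  refine ⟨φ, hφ, fun h => ⟨L h, ?_⟩⟩
  exact (WeakDual.eval_continuous h).continuousAt.tendsto.comp hL

lemma lintegral_gradV {v : Pt m n → ℝ} (hv : ContDiff ℝ (⊤ : ℕ∞) v) (hs : HasCompactSupport v) :
    ∫⁻ q, ‖gradV A v q‖ₑ ^ (2 : ℝ) = ENNReal.ofReal (∫ q, gradSq m n A v q) := by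
  have hc : Continuous fun q => ‖gradV A v q‖ ^ 2 := (continuous_gradV A hv).norm.pow 2
  have hcs : HasCompactSupport fun q => ‖gradV A v q‖ ^ 2 :=
    (hasCompactSupport_gradV A hs).norm.comp_left (g := fun a : ℝ => a ^ 2) (by simp)
  have hi := hc.integrable_of_hasCompactSupport (μ := volume) hcs
  have h := ofReal_integral_eq_lintegral_ofReal hi (Eventually.of_forall fun q => sq_nonneg _)
  simp only [norm_gradV_sq A v] at h
  rw [h]
  refine lintegral_congr fun q => ?_
  rw [← norm_gradV_sq A v q, ← ofReal_norm, ENNReal.ofReal_rpow_of_nonneg (norm_nonneg _) two_pos.le,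
    Real.rpow_two]

lemma memLp_gradV {v : Pt m n → ℝ} (hv : ContDiff ℝ (⊤ : ℕ∞) v) (hs : HasCompactSupport v) :
    MemLp (gradV A v) 2 :=
  (continuous_gradV A hv).memLp_of_hasCompactSupport (hasCompactSupport_gradV A hs)

/-- Weak compactness of the gradients makes every far truncation converge pointwise along one
common subsequence. -/
lemma exists_subseq_trunc (hm : 1 ≤ m) (hn : 1 ≤ n) (hA : IsHType m n A)
    {u : ℕ → Pt m n → ℝ} (hu : ∀ k, ContDiff ℝ (⊤ : ℕ∞) (u k))
    (hs : ∀ k, HasCompactSupport (u k)) (hb : ∀ k, ∫ q, gradSq m n A (u k) q ≤ 1) :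
    ∃ φ : ℕ → ℕ, StrictMono φ ∧ ∀ r : ℝ, 0 < r → ∀ x,
      ∃ L : ℝ, Tendsto (fun k => trunc A (gball m n r)ᶜ (u (φ k)) x) atTop (nhds L) := by
  have hQ := Qh_pos hm hn
  have hmem := fun k => memLp_gradV (A := A) (hu k) (hs k)
  have : Fact ((2 : ENNReal) ≠ ⊤) := ⟨by simp⟩
  obtain ⟨φ, hφ, h⟩ := exists_weak_subseq
    (H := Lp (EuclideanSpace ℝ (Fin m)) 2 (volume : Measure (Pt m n)))
    (fun k => (hmem k).toLp) (fun k => by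
      rw [Lp.norm_toLp]
      refine ENNReal.toReal_le_of_le_ofReal one_pos.le ?_
      rw [eLpNorm_eq_lintegral_rpow_enorm_toReal (by simp) (by simp)]
      simp only [ENNReal.toReal_ofNat]
      rw [lintegral_gradV (hu k) (hs k), ENNReal.ofReal_one]
      refine ENNReal.rpow_le_one ?_ (by norm_num)
      exact ENNReal.ofReal_le_one.2 (hb k))
  refine ⟨φ, hφ, fun r hr x => ?_⟩
  have hS := (measurableSet_gball (m := m) (n := n) r).compl
  have hK := memLp_kernel hA hS
    (lintegral_kE_far_ne_top hm hn hr two_pos (by linarith)) x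
  obtain ⟨L, hL⟩ := h hK.toLp
  refine ⟨L, hL.congr fun k => ?_⟩
  rw [trunc_eq hA, L2.inner_def]
  refine integral_congr_ae ?_
  filter_upwards [(hmem (φ k)).coeFn_toLp, hK.coeFn_toLp] with z h1 h2
  rw [h1, h2]

end compactness

/-! ### Near and far parts of the representation -/

section assembly

variable {m n : ℕ} {A : Fin n → Matrix (Fin m) (Fin m) ℝ}

/-- `L^p` bound for the part of the representation whose kernel lives on `S`; used on small balls
with `p` subcritical and on their complements with `p` supercritical. -/
lemma near_le {p : ℝ} (hp : 2 ≤ p) {v : Pt m n → ℝ} (hv : ContDiff ℝ (⊤ : ℕ∞) v)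
    (hb : ∫⁻ q, ‖gradV A v q‖ₑ ^ (2 : ℝ) ≤ 4) {S : Set (Pt m n)} (hS : MeasurableSet S) :
    ∫⁻ x, (∫⁻ y, ‖gradV A v (gmul A x y)‖ₑ * kE m n S y) ^ p
      ≤ 4 ^ (p / 2) * (∫⁻ y, kE m n S y ^ (2 * p / (p + 2))) ^ (1 + p / 2) := by
  refine (young hp (continuous_gradV A hv).enorm.measurable (measurable_kE hS)).trans ?_
  gcongr

/-- Cauchy–Schwarz bound for the truncated integral, uniform in the point. -/
lemma enorm_trunc_le_const (hA : IsHType m n A) {v : Pt m n → ℝ} (hv : ContDiff ℝ (⊤ : ℕ∞) v)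
    (hb : ∫⁻ q, ‖gradV A v q‖ₑ ^ (2 : ℝ) ≤ 4) {S : Set (Pt m n)} (hS : MeasurableSet S)
    (x : Pt m n) :
    ‖trunc A S v x‖ₑ ≤ 4 ^ ((1 : ℝ) / 2) * (∫⁻ y, kE m n S y ^ (2 : ℝ)) ^ ((1 : ℝ) / 2) := by
  have hc : Measurable fun y => ‖gradV A v y‖ₑ := (continuous_gradV A hv).enorm.measurable
  refine (enorm_trunc_le hA S v x).trans ?_
  refine (ENNReal.lintegral_mul_le_Lp_mul_Lq volume Real.HolderConjugate.two_two
    (hc.comp (continuous_gmul_left x).measurable).aemeasurable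
    (measurable_kE hS).aemeasurable).trans ?_
  have h : ∫⁻ y, ‖gradV A v (gmul A x y)‖ₑ ^ (2 : ℝ) = ∫⁻ q, ‖gradV A v q‖ₑ ^ (2 : ℝ) :=
    (measurePreserving_gmul_left x).lintegral_comp (hc.pow_const 2)
  simp only [Function.comp_apply, h]
  gcongr

/-- Bounded gradients and pointwise convergence of the far truncations give convergence in the
weighted space: interpolate between a uniform `L^q` bound with `q` above the critical exponent and
dominated convergence against a power of the weight. -/
lemma tendsto_far (hm : 1 ≤ m) (hn : 1 ≤ n) (hA : IsHType m n A) {p : ℝ} (hp1 : 2 ≤ p)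
    (hp2 : p < 2 * Qh m n / (Qh m n - 2)) {r : ℝ} (hr : 0 < r) {ι : Type*} {l : Filter ι}
    [l.IsCountablyGenerated] {v : ι → Pt m n → ℝ} (hv : ∀ i, ContDiff ℝ (⊤ : ℕ∞) (v i))
    (hb : ∀ i, ∫⁻ q, ‖gradV A (v i) q‖ₑ ^ (2 : ℝ) ≤ 4)
    (hlim : ∀ x, Tendsto (fun i => trunc A (gball m n r)ᶜ (v i) x) l (nhds 0)) :
    Tendsto (fun i => ∫⁻ x, ‖trunc A (gball m n r)ᶜ (v i) x‖ₑ ^ p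
      * ENNReal.ofReal (Dn 1 x ^ (-((2 * Qh m n / (Qh m n - 2) - p) * (Qh m n - 2)) / 4)))
      l (nhds 0) := by
  have hQ := Qh_pos hm hn
  set D := 2 * Qh m n / (Qh m n - 2) - p with hD
  have hD0 : 0 < D := by linarith
  -- `p + D` is the critical exponent. With `q` slightly above it and `p'` slightly below `p`,
  -- Hölder with exponents `q / p'` and `τ` leaves the factor `T ^ η * W`; the bound `η ≤ D / 4`
  -- is what makes `W ^ τ` integrable, and `η ≤ 1` keeps `p'` positive.
  obtain ⟨η, hη0, hηD, hη1⟩ : ∃ η : ℝ, 0 < η ∧ η ≤ D / 4 ∧ η ≤ 1 :=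
    ⟨min (D / 4) 1, by positivity, min_le_left _ _, min_le_right _ _⟩
  set q := p + D + η with hq
  set p' := p - η with hp'
  have hcrit : (p + D) * (Qh m n - 2) = 2 * Qh m n := by
    rw [hD]; have : Qh m n - 2 ≠ 0 := by linarith
    field_simp; ring
  have hq0 : 0 < q := by linarith
  have hp'0 : 0 < p' := by linarith
  have hqp : 0 < q - p' := by linarith
  set τ := q / (q - p') with hτ
  have hτ0 : 0 < τ := by positivity
  have hS := (measurableSet_gball (m := m) (n := n) r).compl
  set T : ι → Pt m n → ENNReal := fun i x => ‖trunc A (gball m n r)ᶜ (v i) x‖ₑ with hT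
  have hTm : ∀ i, Measurable (T i) := fun i => (measurable_trunc hS (hv i)).enorm
  set W : Pt m n → ENNReal := fun x => ENNReal.ofReal (Dn 1 x ^ (-(D * (Qh m n - 2)) / 4)) with hW
  have hWm : Measurable W := (measurable_Dn_rpow _ _).ennreal_ofReal
  set M := (4 : ENNReal) ^ ((1 : ℝ) / 2)
    * (∫⁻ y, kE m n (gball m n r)ᶜ y ^ (2 : ℝ)) ^ ((1 : ℝ) / 2) with hM
  have hMt : M ≠ ⊤ := by
    refine ENNReal.mul_ne_top (ENNReal.rpow_ne_top_of_nonneg (by norm_num) (by simp))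
      (ENNReal.rpow_ne_top_of_nonneg (by norm_num) ?_)
    exact lintegral_kE_far_ne_top hm hn hr two_pos (by linarith)
  have hTM : ∀ i x, T i x ≤ M := fun i x => enorm_trunc_le_const hA (hv i) (hb i) hS x
  set C := (4 : ENNReal) ^ (q / 2)
    * (∫⁻ y, kE m n (gball m n r)ᶜ y ^ (2 * q / (q + 2))) ^ (1 + q / 2) with hC
  have hCt : C ≠ ⊤ := by
    refine ENNReal.mul_ne_top (ENNReal.rpow_ne_top_of_nonneg (by positivity) (by simp))
      (ENNReal.rpow_ne_top_of_nonneg (by positivity) ?_)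
    refine lintegral_kE_far_ne_top hm hn hr (by positivity) ?_
    rw [div_mul_eq_mul_div, lt_div_iff₀ (by linarith)]
    have : 0 < η * (Qh m n - 2) := mul_pos hη0 (by linarith)
    rw [hq]
    linarith
  have hTC : ∀ i, ∫⁻ x, T i x ^ q ≤ C := fun i => by
    refine le_trans (lintegral_mono fun x => ?_) (near_le (by linarith) (hv i) (hb i) hS)
    exact ENNReal.rpow_le_rpow (enorm_trunc_le hA _ _ x) hq0.le
  have hWτ : ∫⁻ x, W x ^ τ ≠ ⊤ := by
    have e : ∀ x, W x ^ τ = ENNReal.ofReal (Dn 1 x ^ (-(D * (Qh m n - 2) * τ) / 4)) := fun x => by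
      rw [hW, ENNReal.ofReal_rpow_of_nonneg (Real.rpow_nonneg (Dn_nonneg 1 x) _) hτ0.le,
        ← Real.rpow_mul (Dn_nonneg 1 x)]
      congr 2
      ring
    simp only [e]
    refine (Integrable.lintegral_lt_top (integrable_Dn_one hm hn ?_)).ne
    rw [hτ, mul_div_assoc', lt_div_iff₀ hqp]
    have h1 : q - p' ≤ 3 / 2 * D := by rw [hq, hp']; linarith
    have h2 : 2 * Qh m n ≤ (Qh m n - 2) * q := by
      rw [hq]; nlinarith
    calc Qh m n * (q - p') ≤ Qh m n * (3 / 2 * D) := by gcongr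
      _ < D * (2 * Qh m n) := by nlinarith
      _ ≤ D * ((Qh m n - 2) * q) := by gcongr
      _ = _ := by ring
  have hconj : (q / p').HolderConjugate τ := by
    rw [Real.holderConjugate_iff]
    refine ⟨by rw [one_lt_div hp'0]; linarith, ?_⟩
    rw [hτ]; field_simp; ring
  have hη' : 0 < η * τ := mul_pos hη0 hτ0
  have hbound : ∀ i, ∫⁻ x, T i x ^ p * W x
      ≤ C ^ (1 / (q / p')) * (∫⁻ x, (T i x ^ η * W x) ^ τ) ^ (1 / τ) := fun i => by
    have h := ENNReal.lintegral_mul_le_Lp_mul_Lq volume hconj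
      (f := fun x => T i x ^ p') (g := fun x => T i x ^ η * W x)
      ((hTm i).pow_const _).aemeasurable (((hTm i).pow_const _).mul hWm).aemeasurable
    have e1 : ∀ x, (T i x ^ p') ^ (q / p') = T i x ^ q := fun x => by
      rw [← ENNReal.rpow_mul, mul_div_cancel₀ _ hp'0.ne']
    have e2 : ∀ x, T i x ^ p * W x = T i x ^ p' * (T i x ^ η * W x) := fun x => by
      rw [← mul_assoc, ← ENNReal.rpow_add_of_nonneg _ _ hp'0.le hη0.le, hp', sub_add_cancel]
    simp only [e1, Pi.mul_apply] at h
    simp only [e2]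
    refine h.trans ?_
    gcongr
    exact hTC i
  have hdct : Tendsto (fun i => ∫⁻ x, (T i x ^ η * W x) ^ τ) l (nhds 0) := by
    rw [← lintegral_zero (α := Pt m n) (μ := volume)]
    refine tendsto_lintegral_filter_of_dominated_convergence (fun x => (M ^ η) ^ τ * W x ^ τ)
      (Eventually.of_forall fun i => (((hTm i).pow_const _).mul hWm).pow_const _)
      (Eventually.of_forall fun i => Eventually.of_forall fun x => ?_) ?_
      (Eventually.of_forall fun x => ?_)
    · rw [ENNReal.mul_rpow_of_nonneg _ _ hτ0.le]
      gcongr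
      exact hTM i x
    · rw [lintegral_const_mul _ (hWm.pow_const _)]
      exact ENNReal.mul_ne_top (ENNReal.rpow_ne_top_of_nonneg hτ0.le
        (ENNReal.rpow_ne_top_of_nonneg hη0.le hMt)) hWτ
    · have h0 : Tendsto (fun i => T i x) l (nhds 0) := by
        simpa using (hlim x).enorm
      have h1 : Tendsto (fun i => T i x ^ η) l (nhds 0) := by
        simpa [ENNReal.zero_rpow_of_pos hη0] using h0.ennrpow_const η
      have h2 : Tendsto (fun i => T i x ^ η * W x) l (nhds 0) := by
        simpa using ENNReal.Tendsto.mul_const h1 (Or.inr (by simp [hW]))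
      simpa [ENNReal.zero_rpow_of_pos hτ0] using h2.ennrpow_const τ
  have hfin : Tendsto (fun i => C ^ (1 / (q / p')) * (∫⁻ x, (T i x ^ η * W x) ^ τ) ^ (1 / τ)) l
      (nhds 0) := by
    have h1 : Tendsto (fun i => (∫⁻ x, (T i x ^ η * W x) ^ τ) ^ (1 / τ)) l (nhds 0) := by
      simpa [ENNReal.zero_rpow_of_pos (inv_pos.2 hτ0)] using hdct.ennrpow_const (1 / τ)
    simpa using ENNReal.Tendsto.const_mul h1
      (Or.inr (ENNReal.rpow_ne_top_of_nonneg (by positivity) hCt))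
  exact tendsto_of_tendsto_of_tendsto_of_le_of_le tendsto_const_nhds hfin
    (fun _ => zero_le) hbound

/-- Bounded gradients and pointwise convergence of all far truncations force convergence to zero
in the weighted space. -/
lemma tendsto_weighted (hm : 1 ≤ m) (hn : 1 ≤ n) (hA : IsHType m n A) {p : ℝ} (hp1 : 2 ≤ p)
    (hp2 : p < 2 * Qh m n / (Qh m n - 2)) {ι : Type*} {l : Filter ι}
    [l.IsCountablyGenerated] {v : ι → Pt m n → ℝ} (hv : ∀ i, ContDiff ℝ (⊤ : ℕ∞) (v i))
    (hs : ∀ i, HasCompactSupport (v i))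
    (hb : ∀ i, ∫⁻ q, ‖gradV A (v i) q‖ₑ ^ (2 : ℝ) ≤ 4)
    (hlim : ∀ r : ℝ, 0 < r → ∀ x, Tendsto (fun i => trunc A (gball m n r)ᶜ (v i) x) l (nhds 0)) :
    Tendsto (fun i => ∫⁻ x, ‖v i x‖ₑ ^ p
      * ENNReal.ofReal (Dn 1 x ^ (-((2 * Qh m n / (Qh m n - 2) - p) * (Qh m n - 2)) / 4)))
      l (nhds 0) := by
  have hQ := Qh_pos hm hn
  have hp0 : 0 < p := by linarith
  set W : Pt m n → ENNReal := fun x => ENNReal.ofReal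
    (Dn 1 x ^ (-((2 * Qh m n / (Qh m n - 2) - p) * (Qh m n - 2)) / 4)) with hW
  have hWm : Measurable W := (measurable_Dn_rpow _ _).ennreal_ofReal
  have hW1 : ∀ x, W x ≤ 1 := fun x => by
    refine ENNReal.ofReal_le_one.2 (Real.rpow_le_one_of_one_le_of_nonpos (one_le_Dn x) ?_)
    have : 0 < (2 * Qh m n / (Qh m n - 2) - p) * (Qh m n - 2) :=
      mul_pos (by linarith) (by linarith)
    linarith
  set c := ‖((m : ℝ) * mass m n)⁻¹‖ₑ with hc
  set K := c ^ p * (2 : ENNReal) ^ (p - 1) with hK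
  have hKt : K ≠ ⊤ := ENNReal.mul_ne_top (ENNReal.rpow_ne_top_of_nonneg hp0.le enorm_ne_top)
    (ENNReal.rpow_ne_top_of_nonneg (by linarith) (by simp))
  set N : ℝ → ENNReal := fun r =>
    4 ^ (p / 2) * (∫⁻ y, kE m n (gball m n r) y ^ (2 * p / (p + 2))) ^ (1 + p / 2) with hN
  have hNlim : Tendsto (fun r => K * N r) (nhdsWithin 0 (Set.Ioi 0)) (nhds 0) := by
    have hp3 : p * (Qh m n - 2) < 2 * Qh m n := by
      rwa [lt_div_iff₀ (by linarith)] at hp2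
    have h := tendsto_lintegral_kE_near (m := m) (n := n) hm hn (s := 2 * p / (p + 2))
      (by positivity) (by
        rw [div_mul_eq_mul_div, div_lt_iff₀ (by linarith)]
        linarith)
    have h1 := h.ennrpow_const (1 + p / 2)
    rw [ENNReal.zero_rpow_of_pos (by positivity)] at h1
    have h2 := ENNReal.Tendsto.const_mul h1
      (a := 4 ^ (p / 2)) (Or.inr (ENNReal.rpow_ne_top_of_nonneg (by positivity) (by simp)))
    rw [mul_zero] at h2
    simpa using ENNReal.Tendsto.const_mul h2 (Or.inr hKt)
  have hsplit : ∀ (r : ℝ) (i : ι), ∫⁻ x, ‖v i x‖ₑ ^ p * W x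
      ≤ K * (∫⁻ x, ‖trunc A (gball m n r)ᶜ (v i) x‖ₑ ^ p * W x) + K * N r := fun r i => by
    have hS := measurableSet_gball (m := m) (n := n) r
    have hTm : Measurable fun x => ‖trunc A (gball m n r)ᶜ (v i) x‖ₑ ^ p * W x :=
      ((measurable_trunc hS.compl (hv i)).enorm.pow_const _).mul hWm
    calc _ ≤ ∫⁻ x, (K * (‖trunc A (gball m n r)ᶜ (v i) x‖ₑ ^ p * W x)
          + K * (∫⁻ y, ‖gradV A (v i) (gmul A x y)‖ₑ * kE m n (gball m n r) y) ^ p) := by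
          refine lintegral_mono fun x => ?_
          have h1 := ENNReal.rpow_le_rpow (enorm_le_trunc_add hm hn hA hS (hv i) (hs i) x) hp0.le
          rw [ENNReal.mul_rpow_of_nonneg _ _ hp0.le] at h1
          have h2 := h1.trans (mul_le_mul_right
            (ENNReal.rpow_add_le_mul_rpow_add_rpow _ _ (by linarith)) _)
          rw [← mul_assoc] at h2
          refine (mul_le_mul_left h2 (W x)).trans ?_
          rw [← hK, mul_assoc, add_mul, mul_add]
          gcongr
          exact mul_le_of_le_one_right' (hW1 x)
      _ = K * (∫⁻ x, ‖trunc A (gball m n r)ᶜ (v i) x‖ₑ ^ p * W x)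
          + K * ∫⁻ x, (∫⁻ y, ‖gradV A (v i) (gmul A x y)‖ₑ * kE m n (gball m n r) y) ^ p := by
          rw [lintegral_add_left (hTm.const_mul K), lintegral_const_mul' _ _ hKt,
            lintegral_const_mul' _ _ hKt]
      _ ≤ _ := by gcongr; exact near_le hp1 (hv i) (hb i) hS
  rw [ENNReal.tendsto_nhds_zero]
  intro ε hε
  have hε2 : 0 < ε / 2 := ENNReal.half_pos hε.ne'
  obtain ⟨r, hr, hr0⟩ := ((ENNReal.tendsto_nhds_zero.1 hNlim _ hε2).and
    self_mem_nhdsWithin).exists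
  have hfar := ENNReal.Tendsto.const_mul
    (tendsto_far hm hn hA hp1 hp2 (r := r) hr0 hv hb (hlim r hr0)) (Or.inr hKt)
  rw [mul_zero] at hfar
  filter_upwards [ENNReal.tendsto_nhds_zero.1 hfar _ hε2] with i hi
  calc _ ≤ _ := hsplit r i
    _ ≤ ε / 2 + ε / 2 := add_le_add hi hr
    _ = ε := ENNReal.add_halves ε

end assembly

/-! ### Cauchy subsequences -/

section final

variable {m n : ℕ} {A : Fin n → Matrix (Fin m) (Fin m) ℝ}

lemma lintegral_gradV_sub_le {u v : Pt m n → ℝ} (hu : ContDiff ℝ (⊤ : ℕ∞) u)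
    (hv : ContDiff ℝ (⊤ : ℕ∞) v) (hus : HasCompactSupport u) (hvs : HasCompactSupport v)
    (hub : ∫ q, gradSq m n A u q ≤ 1) (hvb : ∫ q, gradSq m n A v q ≤ 1) :
    ∫⁻ q, ‖gradV A (fun q => u q - v q) q‖ₑ ^ (2 : ℝ) ≤ 4 := by
  have hm1 : Measurable fun q => (2 : ENNReal) * ‖gradV A u q‖ₑ ^ (2 : ℝ) :=
    ((continuous_gradV A hu).enorm.measurable.pow_const _).const_mul _
  calc _ ≤ ∫⁻ q, (2 * ‖gradV A u q‖ₑ ^ (2 : ℝ) + 2 * ‖gradV A v q‖ₑ ^ (2 : ℝ)) := by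
        refine lintegral_mono fun q => ?_
        rw [gradV_sub hu hv]
        refine (ENNReal.rpow_le_rpow enorm_sub_le two_pos.le).trans ?_
        refine (ENNReal.rpow_add_le_mul_rpow_add_rpow _ _ one_le_two).trans_eq ?_
        rw [show (2 : ℝ) - 1 = 1 by norm_num, ENNReal.rpow_one, mul_add]
    _ = 2 * ENNReal.ofReal (∫ q, gradSq m n A u q)
        + 2 * ENNReal.ofReal (∫ q, gradSq m n A v q) := by
        rw [lintegral_add_left hm1, lintegral_const_mul' _ _ (by simp),
          lintegral_const_mul' _ _ (by simp), lintegral_gradV hu hus, lintegral_gradV hv hvs]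
    _ ≤ 2 * 1 + 2 * 1 := by
        gcongr <;> exact ENNReal.ofReal_le_one.2 (by assumption)
    _ = 4 := by norm_num

lemma Uf_rpow (x : Pt m n) (d : ℝ) : Uf m n x ^ d = Dn 1 x ^ (-(d * (Qh m n - 2)) / 4) := by
  have : Uf m n x = Dn 1 x ^ (-(Qh m n - 2) / 4) := rfl
  rw [this, ← Real.rpow_mul (Dn_nonneg 1 x)]
  congr 1
  ring

/-- The Cauchy property along a subsequence, as convergence to zero of the double sequence of
`p`-th powers of weighted distances. -/
lemma exists_cauchy_subseq (hm : 1 ≤ m) (hn : 1 ≤ n) (hA : IsHType m n A) {p : ℝ} (hp1 : 2 ≤ p)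
    (hp2 : p < 2 * Qh m n / (Qh m n - 2)) {u : ℕ → Pt m n → ℝ}
    (hu : ∀ k, ContDiff ℝ (⊤ : ℕ∞) (u k)) (hs : ∀ k, HasCompactSupport (u k))
    (hb : ∀ k, ∫ q, gradSq m n A (u k) q ≤ 1) :
    ∃ φ : ℕ → ℕ, StrictMono φ ∧
      Tendsto (fun i : ℕ × ℕ => ∫⁻ x, ‖u (φ i.1) x - u (φ i.2) x‖ₑ ^ p
        * ENNReal.ofReal (Dn 1 x ^ (-((2 * Qh m n / (Qh m n - 2) - p) * (Qh m n - 2)) / 4)))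
        (atTop ×ˢ atTop) (nhds 0) := by
  obtain ⟨φ, hφ, hL⟩ := exists_subseq_trunc hm hn hA hu hs hb
  refine ⟨φ, hφ, ?_⟩
  refine tendsto_weighted hm hn hA hp1 hp2 (v := fun (i : ℕ × ℕ) q => u (φ i.1) q - u (φ i.2) q)
    (fun i => (hu _).sub (hu _)) (fun i => (hs _).sub (hs _))
    (fun i => lintegral_gradV_sub_le (hu _) (hu _) (hs _) (hs _) (hb _) (hb _))
    fun r hr x => ?_
  obtain ⟨L, hL⟩ := hL r hr x
  have h1 : Tendsto (fun i : ℕ × ℕ => trunc A (gball m n r)ᶜ (u (φ i.1)) x) (atTop ×ˢ atTop)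
      (nhds L) := hL.comp tendsto_fst
  have h2 : Tendsto (fun i : ℕ × ℕ => trunc A (gball m n r)ᶜ (u (φ i.2)) x) (atTop ×ˢ atTop)
      (nhds L) := hL.comp tendsto_snd
  have h := h1.sub h2
  rw [sub_self] at h
  simpa only [trunc_sub hm hn hA (measurableSet_gball r).compl (hu _) (hs _) (hu _) (hs _)] using h

end final

/-- **Compactness of the weighted embedding (Lemma 3.2, sequential form)**. -/
theorem weighted_embedding_compact (m n : ℕ) (hm : 1 ≤ m) (hn : 1 ≤ n)
    (A : Fin n → Matrix (Fin m) (Fin m) ℝ) (hA : IsHType m n A)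
    (p : ℝ) (hp1 : 2 ≤ p) (hp2 : p < 2 * Qh m n / (Qh m n - 2))
    (u : ℕ → Pt m n → ℝ) (hu : ∀ k, ContDiff ℝ (⊤ : ℕ∞) (u k))
    (hsupp : ∀ k, HasCompactSupport (u k))
    (hbound : ∀ k, ∫ q : Pt m n, gradSq m n A (u k) q ≤ 1) :
    ∃ φ : ℕ → ℕ, StrictMono φ ∧
      ∀ ε : ℝ, 0 < ε → ∃ N : ℕ, ∀ j ≥ N, ∀ l ≥ N,
        (∫ q : Pt m n,
            |u (φ j) q - u (φ l) q| ^ p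
              * Uf m n q ^ (2 * Qh m n / (Qh m n - 2) - p)) ^ (1 / p) < ε := by
  obtain ⟨φ, hφ, hlim⟩ := exists_cauchy_subseq hm hn hA hp1 hp2 hu hsupp hbound
  refine ⟨φ, hφ, fun ε hε => ?_⟩
  have hp0 : 0 < p := by linarith
  have hev := hlim.eventually_lt_const (show 0 < ENNReal.ofReal (ε ^ p) by
    rw [ENNReal.ofReal_pos]; positivity)
  rw [prod_atTop_atTop_eq, eventually_atTop] at hev
  obtain ⟨⟨N₁, N₂⟩, hN⟩ := hev
  refine ⟨max N₁ N₂, fun j hj l hl => ?_⟩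
  have h := hN (j, l) ⟨(le_max_left _ _).trans hj, (le_max_right _ _).trans hl⟩
  have hnn : ∀ q : Pt m n, 0 ≤ |u (φ j) q - u (φ l) q| ^ p
      * Uf m n q ^ (2 * Qh m n / (Qh m n - 2) - p) := fun q => by
    rw [Uf_rpow]
    exact mul_nonneg (Real.rpow_nonneg (abs_nonneg _) _) (Real.rpow_nonneg (Dn_nonneg 1 q) _)
  have hI : ∫ q : Pt m n, |u (φ j) q - u (φ l) q| ^ p
      * Uf m n q ^ (2 * Qh m n / (Qh m n - 2) - p) < ε ^ p := by
    rw [integral_eq_lintegral_of_nonneg_ae (Eventually.of_forall hnn)]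
    · refine ENNReal.toReal_lt_of_lt_ofReal ?_
      refine lt_of_eq_of_lt (lintegral_congr fun q => ?_) h
      rw [Uf_rpow, ENNReal.ofReal_mul (Real.rpow_nonneg (abs_nonneg _) _),
        ← ENNReal.ofReal_rpow_of_nonneg (abs_nonneg _) hp0.le, ← Real.norm_eq_abs, ofReal_norm]
    · simp only [Uf_rpow]
      exact ((((hu _).continuous.sub (hu _).continuous).abs.measurable.pow_const p).mul
        (measurable_Dn_rpow _ _)).aestronglyMeasurable
  calc _ < (ε ^ p) ^ (1 / p) :=
        Real.rpow_lt_rpow (integral_nonneg hnn) hI (by positivity)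
    _ = ε := by rw [← Real.rpow_mul hε.le, mul_one_div_cancel hp0.ne', Real.rpow_one]
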